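/- arXiv:0706.1091 — 6 statements merged into one kernel-verified Lean document; each statement's English description precedes it below -/
import Mathlib

section
/- Let H be a real inner product space and let h : 𝕋 → H be a measurable function with ‖h(y)‖ = 1 for almost every y. Define G : 𝕋 → H by G(x) = ∫_𝕋 f(x,y) h(y) dy. Then ∫_𝕋 ‖G(x)‖ dx ≤ 2/π. -/
open MeasureTheory Real

/-!
`G` is the convolution of `h` with the even square wave `k` of period `1`. The Fourier coefficients
of `k` have absolute value at most `2 / π`, attained at frequencies `±1`, so by Parseval's identity
convolution with `k` has norm at most `2 / π` on scalar `L²`. Summing the squares of the scalar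
bounds over an orthonormal family extends this to Hilbert-valued functions with the same constant:
`‖G‖₂ ≤ 2 / π * ‖h‖₂ = 2 / π`. The circle has total mass one, so `‖G‖₁ ≤ ‖G‖₂`.
-/

open scoped ENNReal Convolution

open ContinuousLinearMap (lsmul)

open AddCircle (haarAddCircle)

universe u

section Hilbert

variable {𝕜 E ι : Type*} [RCLike 𝕜] [NormedAddCommGroup E] [InnerProductSpace 𝕜 E]

theorem tsum_enorm_inner_sq_eq_ofReal {v : ι → E} (hv : Orthonormal 𝕜 v) (x : E) :
    ∑' i, ‖inner 𝕜 (v i) x‖ₑ ^ 2 = ENNReal.ofReal (∑' i, ‖inner 𝕜 (v i) x‖ ^ 2) := by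
  rw [ENNReal.ofReal_tsum_of_nonneg (fun _ => sq_nonneg _) (hv.inner_products_summable x)]
  simp only [ENNReal.ofReal_pow (norm_nonneg _), ofReal_norm]

theorem tsum_enorm_inner_sq_le {v : ι → E} (hv : Orthonormal 𝕜 v) (x : E) :
    ∑' i, ‖inner 𝕜 (v i) x‖ₑ ^ 2 ≤ ‖x‖ₑ ^ 2 := by
  rw [tsum_enorm_inner_sq_eq_ofReal hv, ← ofReal_norm, ← ENNReal.ofReal_pow (norm_nonneg _)]
  exact ENNReal.ofReal_le_ofReal (hv.tsum_inner_products_le x)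

theorem tsum_enorm_inner_sq_eq (b : HilbertBasis ι 𝕜 E) (x : E) :
    ∑' i, ‖inner 𝕜 (b i) x‖ₑ ^ 2 = ‖x‖ₑ ^ 2 := by
  have parseval : HasSum (fun i => ‖inner 𝕜 (b i) x‖ ^ 2) (‖x‖ ^ 2) := by
    simpa [b.repr_apply_apply] using lp.hasSum_norm (by simp) (b.repr x)
  rw [tsum_enorm_inner_sq_eq_ofReal b.orthonormal, parseval.tsum_eq,
    ENNReal.ofReal_pow (norm_nonneg _), ofReal_norm]

theorem countable_of_orthonormal [TopologicalSpace.SeparableSpace E] {v : ι → E}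
    (hv : Orthonormal 𝕜 v) : Countable ι := by
  refine Pairwise.countable_of_isOpen_disjoint (s := fun i => Metric.ball (v i) (1 / 2))
    (fun i j hij => Metric.ball_disjoint_ball ?_) (fun _ => Metric.isOpen_ball)
    fun i => ⟨v i, by simp⟩
  have hsq : ‖v i - v j‖ ^ 2 = 2 := by
    rw [@norm_sub_sq 𝕜, hv.1 i, hv.1 j, hv.2 hij]
    norm_num
  rw [dist_eq_norm]
  nlinarith [norm_nonneg (v i - v j)]

theorem exists_countable_orthonormal_tsum_enorm_inner_sq_eq {E : Type u} [NormedAddCommGroup E]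
    [InnerProductSpace 𝕜 E] [CompleteSpace E] {t : Set E} (ht : TopologicalSpace.IsSeparable t) :
    ∃ (ι : Type u) (_ : Countable ι) (v : ι → E), Orthonormal 𝕜 v ∧
      ∀ x ∈ t, ∑' i, ‖inner 𝕜 (v i) x‖ₑ ^ 2 = ‖x‖ₑ ^ 2 := by
  let V : Submodule 𝕜 E := (Submodule.span 𝕜 t).topologicalClosure
  have : TopologicalSpace.SeparableSpace V := (ht.span (R := 𝕜)).closure.separableSpace
  have : CompleteSpace V := (Submodule.isClosed_topologicalClosure _).completeSpace_coe
  obtain ⟨w, b, -⟩ := exists_hilbertBasis 𝕜 V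
  exact ⟨w, countable_of_orthonormal b.orthonormal, fun i => b i,
    b.orthonormal.comp_linearIsometry V.subtypeₗᵢ,
    fun x hx => tsum_enorm_inner_sq_eq b ⟨x, subset_closure (Submodule.subset_span hx)⟩⟩

end Hilbert

section Bochner

variable {α E : Type*} [MeasurableSpace α] {μ : Measure α} [NormedAddCommGroup E] {h : α → E}

theorem lpNorm_eq_one_of_norm_eq_one [IsProbabilityMeasure μ] {p : ℝ≥0∞}
    (hh : AEStronglyMeasurable h μ) (h1 : ∀ᵐ x ∂μ, ‖h x‖ = 1) (hp : p ≠ 0) :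
    lpNorm h p μ = 1 := by
  rw [← lpNorm_norm hh, ← toReal_eLpNorm hh.norm, eLpNorm_congr_ae h1,
    eLpNorm_const _ hp (IsProbabilityMeasure.ne_zero μ)]
  simp

theorem integral_smul_eq_zero_of_not_aestronglyMeasurable [NormedSpace ℝ E] {c : α → ℝ}
    (hc : AEMeasurable c μ) (hc0 : ∀ x, c x ≠ 0) (hh : ¬AEStronglyMeasurable h μ) :
    ∫ x, c x • h x ∂μ = 0 :=
  integral_non_aestronglyMeasurable fun hch => hh <|
    (hc.inv.aestronglyMeasurable.smul hch).congr (.of_forall fun x => inv_smul_smul₀ (hc0 x) _)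

end Bochner

section L2

variable {α β 𝕜 E : Type*} [MeasurableSpace α] [MeasurableSpace β] {μ : Measure α} {ν : Measure β}
  [RCLike 𝕜] [NormedAddCommGroup E]

theorem eLpNorm_two_sq_eq_lintegral (g : α → E) :
    eLpNorm g 2 μ ^ 2 = ∫⁻ x, ‖g x‖ₑ ^ 2 ∂μ := by
  simpa using eLpNorm_nnreal_pow_eq_lintegral (f := g) (μ := μ) (p := 2) two_ne_zero

variable [InnerProductSpace 𝕜 E]

theorem lintegral_tsum_enorm_inner_sq {ι : Type*} [Countable ι] {g : α → E}
    (hg : AEStronglyMeasurable g μ) (v : ι → E) :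
    ∫⁻ x, ∑' i, ‖inner 𝕜 (v i) (g x)‖ₑ ^ 2 ∂μ =
      ∑' i, eLpNorm (fun x => inner 𝕜 (v i) (g x)) 2 μ ^ 2 := by
  simp only [eLpNorm_two_sq_eq_lintegral]
  exact lintegral_tsum fun i => hg.const_inner.enorm.pow_const 2

-- Parseval is only needed on the essential range of `g`, which is separable even if `E` is not;
-- for `h`, Bessel's inequality suffices.
theorem eLpNorm_two_le_of_forall_inner [CompleteSpace E] {g : α → E} {h : β → E}
    (hg : AEStronglyMeasurable g μ) (hh : AEStronglyMeasurable h ν) {C : ℝ≥0∞}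
    (hC : ∀ v : E, eLpNorm (fun x => inner 𝕜 v (g x)) 2 μ ≤
      C * eLpNorm (fun y => inner 𝕜 v (h y)) 2 ν) :
    eLpNorm g 2 μ ≤ C * eLpNorm h 2 ν := by
  obtain ⟨t, ht, hgt⟩ := hg.isSeparable_ae_range
  obtain ⟨ι, _, v, hv, hvt⟩ :=
    exists_countable_orthonormal_tsum_enorm_inner_sq_eq (𝕜 := 𝕜) ht
  rw [← ENNReal.pow_le_pow_left_iff two_ne_zero]
  calc eLpNorm g 2 μ ^ 2
      = ∫⁻ x, ∑' i, ‖inner 𝕜 (v i) (g x)‖ₑ ^ 2 ∂μ := by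
        rw [eLpNorm_two_sq_eq_lintegral]
        exact lintegral_congr_ae (hgt.mono fun x hx => (hvt _ hx).symm)
    _ = ∑' i, eLpNorm (fun x => inner 𝕜 (v i) (g x)) 2 μ ^ 2 :=
        lintegral_tsum_enorm_inner_sq hg v
    _ ≤ ∑' i, (C * eLpNorm (fun y => inner 𝕜 (v i) (h y)) 2 ν) ^ 2 := by
        gcongr with i
        exact hC (v i)
    _ = C ^ 2 * ∫⁻ y, ∑' i, ‖inner 𝕜 (v i) (h y)‖ₑ ^ 2 ∂ν := by
        simp only [mul_pow, ENNReal.tsum_mul_left, lintegral_tsum_enorm_inner_sq hh v]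
    _ ≤ C ^ 2 * ∫⁻ y, ‖h y‖ₑ ^ 2 ∂ν := by
        gcongr with y
        exact tsum_enorm_inner_sq_le hv (h y)
    _ = (C * eLpNorm h 2 ν) ^ 2 := by rw [← eLpNorm_two_sq_eq_lintegral, mul_pow]

end L2

section Convolution

variable {G : Type*} [MeasurableSpace G] [AddCommGroup G] {μ : Measure G}

theorem ofReal_convolution (k u : G → ℝ) (x : G) :
    (((k ⋆[lsmul ℝ ℝ, μ] u) x : ℝ) : ℂ) =
      ((fun t => (k t : ℂ)) ⋆[lsmul ℂ ℂ, μ] fun t => (u t : ℂ)) x := by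
  simp [convolution_def, ← integral_complex_ofReal]

theorem inner_convolution_lsmul {H : Type*} [NormedAddCommGroup H] [InnerProductSpace ℝ H]
    [CompleteSpace H] {k : G → ℝ} {h : G → H} (hkh : ConvolutionExists k h (lsmul ℝ ℝ) μ)
    (v : H) (x : G) : inner ℝ v ((k ⋆[lsmul ℝ ℝ, μ] h) x) =
      (k ⋆[lsmul ℝ ℝ, μ] fun t => inner ℝ v (h t)) x := by
  simpa [convolution_def, inner_smul_right] using (integral_inner (𝕜 := ℝ) (hkh x) v).symm

variable {𝕜 E : Type*} [RCLike 𝕜] [NormedAddCommGroup E] [NormedSpace 𝕜 E] [MeasurableAdd₂ G]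
  [MeasurableNeg G] [μ.IsAddLeftInvariant] {k : G → 𝕜} {h : G → E}

theorem convolutionExists_lsmul_of_memLp_two [μ.IsNegInvariant] (hk : MemLp k 2 μ)
    (hh : MemLp h 2 μ) : ConvolutionExists k h (lsmul 𝕜 𝕜) μ := fun x =>
  memLp_one_iff_integrable.1
    ((hh.comp_measurePreserving (μ.measurePreserving_sub_left x)).smul hk)

variable [NormedSpace ℝ E]

theorem aestronglyMeasurable_convolution_lsmul [SFinite μ] (hk : AEStronglyMeasurable k μ)
    (hh : AEStronglyMeasurable h μ) : AEStronglyMeasurable (k ⋆[lsmul 𝕜 𝕜, μ] h) μ :=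
  (hk.convolution_integrand (lsmul 𝕜 𝕜) hh).integral_prod_right'

variable [μ.IsNegInvariant]

theorem enorm_convolution_lsmul_le (hk : AEStronglyMeasurable k μ) (hh : AEStronglyMeasurable h μ)
    (x : G) : ‖(k ⋆[lsmul 𝕜 𝕜, μ] h) x‖ₑ ≤ eLpNorm k 2 μ * eLpNorm h 2 μ := by
  have hx := μ.measurePreserving_sub_left x
  calc ‖(k ⋆[lsmul 𝕜 𝕜, μ] h) x‖ₑ
      ≤ eLpNorm (k • (h ∘ (x - ·))) 1 μ :=
        (enorm_integral_le_lintegral_enorm _).trans_eq eLpNorm_one_eq_lintegral_enorm.symm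
    _ ≤ eLpNorm k 2 μ * eLpNorm (h ∘ (x - ·)) 2 μ :=
        eLpNorm_smul_le_mul_eLpNorm (hh.comp_measurePreserving hx) hk
    _ = eLpNorm k 2 μ * eLpNorm h 2 μ := by rw [eLpNorm_comp_measurePreserving hh hx]

theorem memLp_convolution_lsmul [IsFiniteMeasure μ] (hk : MemLp k 2 μ) (hh : MemLp h 2 μ)
    (p : ℝ≥0∞) : MemLp (k ⋆[lsmul 𝕜 𝕜, μ] h) p μ :=
  .of_enorm_bound (aestronglyMeasurable_convolution_lsmul hk.1 hh.1)
    (ENNReal.mul_ne_top hk.2.ne hh.2.ne) (.of_forall (enorm_convolution_lsmul_le hk.1 hh.1))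

end Convolution

section AddCircle

open AddCircle

variable {T : ℝ} [Fact (0 < T)]

theorem fourier_smul_convolution {E : Type*} [NormedAddCommGroup E] [NormedSpace ℂ E]
    (k : AddCircle T → ℂ) (h : AddCircle T → E) (n : ℤ) (x : AddCircle T) :
    fourier n x • (k ⋆[lsmul ℂ ℂ, haarAddCircle] h) x =
      ((fun t => fourier n t • k t) ⋆[lsmul ℂ ℂ, haarAddCircle]
        fun t => fourier n t • h t) x := by
  rw [convolution_def, convolution_def, ← integral_smul]
  congr 1 with t
  have hfourier : fourier n x = fourier n t * fourier n (x - t) := by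
    rw [fourier_apply, fourier_apply, fourier_apply, ← Circle.coe_mul, ← toCircle_add,
      ← smul_add, add_sub_cancel]
  simp only [hfourier, ContinuousLinearMap.lsmul_apply, smul_smul, smul_eq_mul]
  congr 1
  ring

theorem fourierCoeff_convolution {E : Type*} [NormedAddCommGroup E] [NormedSpace ℂ E]
    [CompleteSpace E] {k : AddCircle T → ℂ} {h : AddCircle T → E}
    (hk : Integrable k haarAddCircle) (hh : Integrable h haarAddCircle) (n : ℤ) :
    fourierCoeff (k ⋆[lsmul ℂ ℂ, haarAddCircle] h) n = fourierCoeff k n • fourierCoeff h n := by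
  simp only [fourierCoeff, fourier_smul_convolution]
  exact integral_convolution _ (hk.fourier_smul (-n)) (hh.fourier_smul (-n))

theorem eLpNorm_two_sq_eq_tsum_fourierCoeff {u : AddCircle T → ℂ} (hu : MemLp u 2 haarAddCircle) :
    eLpNorm u 2 haarAddCircle ^ 2 = ∑' n, ‖fourierCoeff u n‖ₑ ^ 2 := by
  have parseval := tsum_enorm_inner_sq_eq fourierBasis hu.toLp
  simp only [← fourierBasis.repr_apply_apply, fourierBasis_repr,
    fourierCoeff_congr_ae hu.coeFn_toLp, Lp.enorm_toLp] at parseval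
  exact parseval.symm

theorem eLpNorm_two_convolution_le_of_fourierCoeff_complex {k u : AddCircle T → ℂ}
    (hk : MemLp k 2 haarAddCircle) (hu : MemLp u 2 haarAddCircle) {C : ℝ≥0∞}
    (hC : ∀ n, ‖fourierCoeff k n‖ₑ ≤ C) :
    eLpNorm (k ⋆[lsmul ℂ ℂ, haarAddCircle] u) 2 haarAddCircle ≤
      C * eLpNorm u 2 haarAddCircle := by
  rw [← ENNReal.pow_le_pow_left_iff two_ne_zero, mul_pow,
    eLpNorm_two_sq_eq_tsum_fourierCoeff (memLp_convolution_lsmul hk hu 2),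
    eLpNorm_two_sq_eq_tsum_fourierCoeff hu, ← ENNReal.tsum_mul_left]
  gcongr with n
  rw [fourierCoeff_convolution (hk.integrable one_le_two) (hu.integrable one_le_two),
    enorm_smul, mul_pow]
  gcongr
  exact hC n

theorem eLpNorm_two_convolution_le_of_fourierCoeff {H : Type*} [NormedAddCommGroup H]
    [InnerProductSpace ℝ H] [CompleteSpace H] {k : AddCircle T → ℝ} {h : AddCircle T → H}
    (hk : MemLp k 2 haarAddCircle) (hh : MemLp h 2 haarAddCircle) {C : ℝ≥0∞}
    (hC : ∀ n, ‖fourierCoeff (fun x => (k x : ℂ)) n‖ₑ ≤ C) :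
    eLpNorm (k ⋆[lsmul ℝ ℝ, haarAddCircle] h) 2 haarAddCircle ≤
      C * eLpNorm h 2 haarAddCircle := by
  refine eLpNorm_two_le_of_forall_inner (𝕜 := ℝ)
    (aestronglyMeasurable_convolution_lsmul hk.1 hh.1) hh.1 fun v => ?_
  have hscalar := eLpNorm_two_convolution_le_of_fourierCoeff_complex hk.ofReal
    (hh.const_inner (𝕜 := ℝ) v).ofReal hC
  simp only [inner_convolution_lsmul (convolutionExists_lsmul_of_memLp_two hk hh)]
  convert hscalar using 1
  · exact eLpNorm_congr_norm_ae (.of_forall fun x =>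
      (Complex.norm_real _).symm.trans (congrArg norm (ofReal_convolution k _ x)))
  · congr 1
    exact eLpNorm_congr_norm_ae (.of_forall fun x => (Complex.norm_real _).symm)

end AddCircle

section SquareWave

variable {T : ℝ}

/-- The even square wave of period `T`, whose `1`-periodic case is the convolution kernel
`f(x, y) = squareWave 1 (x - y)`. At the jumps `±T / 4` its value is `-1`. -/
noncomputable def squareWave (T : ℝ) (x : AddCircle T) : ℝ :=
  if ‖x‖ < T / 4 then 1 else -1

theorem abs_squareWave (x : AddCircle T) : |squareWave T x| = 1 := by
  unfold squareWave
  split_ifs <;> simp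

theorem squareWave_ne_zero (x : AddCircle T) : squareWave T x ≠ 0 :=
  abs_ne_zero.1 ((abs_squareWave x).trans_ne one_ne_zero)

theorem measurable_squareWave : Measurable (squareWave T) :=
  Measurable.ite (measurableSet_lt measurable_norm measurable_const) measurable_const
    measurable_const

variable [hT : Fact (0 < T)]

open AddCircle

theorem memLp_squareWave (p : ℝ≥0∞) : MemLp (squareWave T) p haarAddCircle :=
  .of_bound measurable_squareWave.aestronglyMeasurable 1
    (.of_forall fun x => (abs_squareWave x).le)

theorem squareWave_coe_of_mem_Ioo {t : ℝ} (ht : t ∈ Set.Ioo (-(T / 4)) (T / 4)) :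
    squareWave T t = 1 := by
  have habs : |t| < T / 4 := abs_lt.2 ht
  have hnorm : ‖(t : AddCircle T)‖ = |t| := by
    rw [norm_coe_eq_abs_iff T hT.out.ne', abs_of_pos hT.out]
    linarith [hT.out]
  exact if_pos (hnorm ▸ habs)

theorem squareWave_coe_of_mem_Icc {t : ℝ} (ht : t ∈ Set.Icc (T / 4) (3 * T / 4)) :
    squareWave T t = -1 := by
  have hdist : ‖(t : AddCircle T) - (T / 2 : ℝ)‖ ≤ T / 4 := by
    rw [← coe_sub]
    exact (QuotientAddGroup.norm_mk_le_norm ..).trans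
      (abs_le.2 ⟨by linarith [ht.1], by linarith [ht.2]⟩)
  have hhalf : ‖((T / 2 : ℝ) : AddCircle T)‖ = T / 2 := by
    rw [norm_half_period_eq, abs_of_pos hT.out]
  refine if_neg (not_lt.2 ?_)
  linarith [norm_sub_norm_le ((T / 2 : ℝ) : AddCircle T) t,
    norm_sub_rev (t : AddCircle T) (T / 2 : ℝ)]

theorem fourierCoeff_squareWave_eq (n : ℤ) :
    fourierCoeff (fun x => (squareWave T x : ℂ)) n =
      (1 / T) • ((∫ t in -(T / 4)..T / 4, fourier (-n) (t : AddCircle T)) -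
        ∫ t in T / 4..3 * T / 4, fourier (-n) (t : AddCircle T)) := by
  have hT0 := hT.out
  have hcont : Continuous fun t : ℝ => fourier (-n) (t : AddCircle T) := by fun_prop
  have hpos : Set.EqOn (fun t : ℝ => fourier (-n) (t : AddCircle T))
      (fun t => fourier (-n) (t : AddCircle T) • (squareWave T t : ℂ))
      (Set.uIoo (-(T / 4)) (T / 4)) := fun t ht => by
    rw [Set.uIoo_of_le (by linarith)] at ht
    simp [squareWave_coe_of_mem_Ioo ht]
  have hneg : Set.EqOn (fun t : ℝ => -fourier (-n) (t : AddCircle T))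
      (fun t => fourier (-n) (t : AddCircle T) • (squareWave T t : ℂ))
      (Set.uIoo (T / 4) (3 * T / 4)) := fun t ht => by
    rw [Set.uIoo_of_le (by linarith)] at ht
    simp [squareWave_coe_of_mem_Icc (Set.Ioo_subset_Icc_self ht)]
  have hend : -(T / 4) + T = 3 * T / 4 := by ring
  rw [fourierCoeff_eq_intervalIntegral _ n (-(T / 4)), hend,
    ← intervalIntegral.integral_add_adjacent_intervals
      ((hcont.intervalIntegrable _ _).congr_uIoo hpos)
      ((hcont.neg.intervalIntegrable _ _).congr_uIoo hneg),
    ← intervalIntegral.integral_congr_uIoo hpos, ← intervalIntegral.integral_congr_uIoo hneg,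
    intervalIntegral.integral_neg, sub_eq_add_neg]

theorem norm_intervalIntegral_fourier_neg_le {n : ℤ} (hn : n ≠ 0) (a b : ℝ) :
    ‖∫ t in a..b, fourier (-n) (t : AddCircle T)‖ ≤ T / (π * |(n : ℝ)|) := by
  have hcont : Continuous fun t : ℝ => fourier (-n) (t : AddCircle T) := by fun_prop
  rw [intervalIntegral.integral_eq_sub_of_hasDerivAt
    (fun t _ => has_antideriv_at_fourier_neg hT hn t) (hcont.intervalIntegrable a b),
    ← mul_sub, norm_mul]
  have hnum : ‖fourier (-n) (b : AddCircle T) - fourier (-n) (a : AddCircle T)‖ ≤ 2 := by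
    refine (norm_sub_le _ _).trans_eq ?_
    rw [fourier_apply, fourier_apply, Circle.norm_coe, Circle.norm_coe, one_add_one_eq_two]
  have hcoeff : ‖(T / (-2 * π * Complex.I * n) : ℂ)‖ = T / (2 * π * |(n : ℝ)|) := by
    simp [abs_of_pos hT.out, abs_of_pos pi_pos]
  calc _ ≤ ‖(T / (-2 * π * Complex.I * n) : ℂ)‖ * 2 := by gcongr
    _ = T / (π * |(n : ℝ)|) := by
        rw [hcoeff]
        field_simp

theorem norm_fourierCoeff_squareWave_le (n : ℤ) :
    ‖fourierCoeff (fun x => (squareWave T x : ℂ)) n‖ ≤ 2 / π := by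
  have hT0 := hT.out
  rw [fourierCoeff_squareWave_eq]
  rcases eq_or_ne n 0 with rfl | hn
  · have hzero : (∫ t in -(T / 4)..T / 4, fourier (-0) (t : AddCircle T)) =
        ∫ t in T / 4..3 * T / 4, fourier (-0) (t : AddCircle T) := by
      simp only [neg_zero, fourier_zero, intervalIntegral.integral_const]
      congr 1
      ring
    rw [hzero, sub_self, smul_zero, norm_zero]
    positivity
  · have hn1 : (1 : ℝ) ≤ |(n : ℝ)| := by exact_mod_cast Int.one_le_abs hn
    rw [norm_smul, Real.norm_of_nonneg (by positivity)]
    calc _ ≤ 1 / T * (T / (π * |(n : ℝ)|) + T / (π * |(n : ℝ)|)) := by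
          gcongr
          exact (norm_sub_le _ _).trans (add_le_add (norm_intervalIntegral_fourier_neg_le hn _ _)
            (norm_intervalIntegral_fourier_neg_le hn _ _))
      _ = 2 / π / |(n : ℝ)| := by field_simp; norm_num
      _ ≤ 2 / π := div_le_self (by positivity) hn1

variable {H : Type*} [NormedAddCommGroup H]

theorem convolution_squareWave_apply [NormedSpace ℝ H] (h : AddCircle T → H) (x : AddCircle T) :
    (squareWave T ⋆[lsmul ℝ ℝ, haarAddCircle] h) x =
      ∫ y, (if dist x y < T / 4 then (1 : ℝ) else -1) • h y ∂haarAddCircle := by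
  rw [convolution_lsmul_swap]
  simp only [squareWave, dist_eq_norm]

theorem convolution_squareWave_of_not_aestronglyMeasurable [NormedSpace ℝ H] {h : AddCircle T → H}
    (hh : ¬AEStronglyMeasurable h haarAddCircle) :
    squareWave T ⋆[lsmul ℝ ℝ, haarAddCircle] h = 0 := by
  ext x
  rw [convolution_lsmul_swap]
  exact integral_smul_eq_zero_of_not_aestronglyMeasurable
    (measurable_squareWave.comp (measurable_const_sub x)).aemeasurable
    (fun y => squareWave_ne_zero (x - y)) hh

theorem eLpNorm_two_convolution_squareWave_le [InnerProductSpace ℝ H] [CompleteSpace H]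
    {h : AddCircle T → H} (hh : MemLp h 2 haarAddCircle) :
    eLpNorm (squareWave T ⋆[lsmul ℝ ℝ, haarAddCircle] h) 2 haarAddCircle ≤
      ENNReal.ofReal (2 / π) * eLpNorm h 2 haarAddCircle :=
  eLpNorm_two_convolution_le_of_fourierCoeff (memLp_squareWave 2) hh fun n =>
    (ofReal_norm _).symm.trans_le (ENNReal.ofReal_le_ofReal (norm_fourierCoeff_squareWave_le n))

end SquareWave

theorem bell_example2_G_norm_bound_general {T : ℝ} [Fact (0 < T)] {H : Type*}
    [NormedAddCommGroup H] [InnerProductSpace ℝ H] [CompleteSpace H] {h : AddCircle T → H}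
    (hh : MemLp h 2 haarAddCircle) :
    ∫ x, ‖(squareWave T ⋆[lsmul ℝ ℝ, haarAddCircle] h) x‖ ∂haarAddCircle ≤
      2 / π * lpNorm h 2 haarAddCircle := by
  have hG : AEStronglyMeasurable (squareWave T ⋆[lsmul ℝ ℝ, haarAddCircle] h) haarAddCircle :=
    aestronglyMeasurable_convolution_lsmul (memLp_squareWave 2).1 hh.1
  have hπ : 0 ≤ 2 / π := by positivity
  rw [← lpNorm_one_eq_integral_norm hG, ← toReal_eLpNorm hG, ← toReal_eLpNorm hh.1,
    ← ENNReal.toReal_ofReal hπ, ← ENNReal.toReal_mul]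
  exact ENNReal.toReal_mono (ENNReal.mul_ne_top ENNReal.ofReal_ne_top hh.2.ne)
    ((eLpNorm_le_eLpNorm_of_exponent_le one_le_two hG).trans
      (eLpNorm_two_convolution_squareWave_le hh))

/-- Let `𝕋 = ℝ/ℤ` with its Haar probability measure and `f(x,y) = 1` if `dist x y < 1/4`,
`-1` otherwise. For measurable `h : 𝕋 → H` of unit norm a.e. and
`G(x) = ∫_𝕋 f(x,y) h(y) dy`, one has `∫_𝕋 ‖G(x)‖ dx ≤ 2/π`. -/
theorem bell_example2_G_norm_bound (H : Type*) [NormedAddCommGroup H]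
    [InnerProductSpace ℝ H] [MeasurableSpace H] [BorelSpace H] [CompleteSpace H]
    (h : UnitAddCircle → H) (hm : Measurable h)
    (h1 : ∀ᵐ y : UnitAddCircle, ‖h y‖ = 1)
    (G : UnitAddCircle → H)
    (hG : ∀ x : UnitAddCircle,
      G x = ∫ y : UnitAddCircle, (if dist x y < 1/4 then (1:ℝ) else -1) • h y) :
    (∫ x : UnitAddCircle, ‖G x‖) ≤ 2 / π := by
  have hvol : (volume : Measure UnitAddCircle) = haarAddCircle := by
    rw [AddCircle.volume_eq_smul_haarAddCircle, ENNReal.ofReal_one, one_smul]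
  have hconv : G = squareWave 1 ⋆[lsmul ℝ ℝ, haarAddCircle] h :=
    funext fun x => by rw [hG, hvol, convolution_squareWave_apply]
  rw [hvol] at h1 ⊢
  rw [hconv]
  -- A Borel function into a nonseparable `H` need not be a.e. strongly measurable; if it is not,
  -- the Bochner integrals defining `G` are zero by convention.
  by_cases hh : AEStronglyMeasurable h haarAddCircle
  · have hmem : MemLp h 2 haarAddCircle := .of_bound hh 1 (h1.mono fun _ => le_of_eq)
    simpa only [lpNorm_eq_one_of_norm_eq_one hh h1 two_ne_zero, mul_one] using
      bell_example2_G_norm_bound_general hmem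
  · rw [convolution_squareWave_of_not_aestronglyMeasurable hh]
    simpa only [Pi.zero_apply, norm_zero, integral_zero] using div_nonneg zero_le_two pi_nonneg
end

section
/- Let H be a real inner product space and let h : (0,1) → H be a measurable function with ‖h(y)‖ = 1 for almost every y. Define G : [0,1] → H by G(x) = ∫₀¹ f(x,y) h(y) dy. Then ∫₀¹ ‖G(x)‖ dx ≤ 2/π. -/
open MeasureTheory Real

/-!
With `c = ∫₀¹ h` one has `G(x) = c - 2 ∫₀ˣ h`, so `G(1) = -G(0)` and `G(x) - cos (πx) c` vanishes at
both endpoints. By the Wirtinger inequality its `L²` norm is at most `π⁻¹` times that of its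
derivative, so it is at most the `L²` norm of `(2/π) h(x) - sin (πx) c`. Expanding the two squares,
the terms in `c` agree (the cross terms by exchanging the order of integration) and cancel, leaving
`‖G‖₂ ≤ (2/π) ‖h‖₂`; Cauchy–Schwarz passes to the `L¹` norm.

The Wirtinger inequality is the Schur test on each half of the interval. To integrate a merely Borel
measurable `h` with values in a possibly nonseparable space, one needs its range to be separable:
an uncountable separated subset of the range would be a discrete uncountable measurable image of a
standard Borel space, contradicting that the reals have only continuum many Borel sets.
-/

open Set
open scoped ENNReal NNReal

theorem countable_of_discreteMeasurableSpace (X : Type*) [MeasurableSpace X]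
    [StandardBorelSpace X] [DiscreteMeasurableSpace X] : Countable X := by
  by_contra hX
  have e : X ≃ᵐ ℝ :=
    PolishSpace.measurableEquivOfNotCountable hX (not_countable_iff.2 inferInstance)
  obtain ⟨b, hb, hbℝ⟩ := MeasurableSpace.CountablyGenerated.isCountablyGenerated (α := ℝ)
  have hcard := MeasurableSpace.cardinal_measurableSet_le_continuum
    (hb.le_aleph0.trans Cardinal.aleph0_le_continuum)
  rw [← hbℝ] at hcard
  have hall : {t : Set ℝ | MeasurableSet t} = univ := eq_univ_of_forall fun t => by
    simpa using e.measurableSet_preimage.1 (MeasurableSet.of_discrete (s := e ⁻¹' t))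
  rw [hall, Cardinal.mk_univ, Cardinal.mk_set, Cardinal.mk_real] at hcard
  exact hcard.not_gt (Cardinal.cantor _)

theorem countable_of_measurable_surjective {X ι : Type*} [MeasurableSpace X]
    [StandardBorelSpace X] [MeasurableSpace ι] [DiscreteMeasurableSpace ι] {f : X → ι}
    (hf : Measurable f) (hsurj : f.Surjective) : Countable ι := by
  obtain ⟨r, hr⟩ := hsurj.hasRightInverse
  -- The range of `r` is the fixed-point set of `r ∘ f`, which is measurable because every map out
  -- of the discrete space `ι` is.
  have hfixed : range r = {x | r (f x) = x} := by
    ext x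
    exact ⟨fun ⟨i, hi⟩ => by simp [← hi, hr i], fun hx => ⟨f x, hx⟩⟩
  have hrange : MeasurableSet (range r) := by
    rw [hfixed]
    exact measurableSet_eq_fun (Measurable.of_discrete.comp hf) measurable_id
  have := hrange.standardBorel
  have : DiscreteMeasurableSpace (range r) := ⟨fun t => by
    refine ⟨f ⁻¹' (r ⁻¹' ((↑) '' t)), hf .of_discrete, ?_⟩
    ext ⟨_, i, rfl⟩
    simp [hr i]⟩
  have := countable_of_discreteMeasurableSpace (range r)
  exact (Equiv.ofInjective r hr.injective).countable_iff.2 this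

theorem countable_of_isSeparated_subset_range {X E : Type*} [MeasurableSpace X]
    [StandardBorelSpace X] [EMetricSpace E] [MeasurableSpace E] [OpensMeasurableSpace E]
    {f : X → E} (hf : Measurable f) {ε : ℝ≥0} (hε : ε ≠ 0) {N : Set E} (hN : N ⊆ range f)
    (hsep : Metric.IsSeparated ε N) : N.Countable := by
  have hclosed : ∀ t ⊆ N, IsClosed t := fun t ht =>
    isClosed_of_spaced_out (edist_mem_uniformity (by positivity)) <|
      (hsep.subset ht).imp fun x y hxy => not_lt.2 hxy.le
  have hfN : MeasurableSet (f ⁻¹' N) := hf (hclosed N subset_rfl).measurableSet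
  have := hfN.standardBorel
  have : DiscreteMeasurableSpace N := ⟨fun t =>
    ⟨(↑) '' t, (hclosed _ (Subtype.coe_image_subset N t)).measurableSet,
      preimage_image_eq t Subtype.val_injective⟩⟩
  have hf_restrict : Measurable fun x : f ⁻¹' N => (⟨f x, x.2⟩ : N) :=
    (hf.comp measurable_subtype_coe).subtype_mk
  refine countable_of_measurable_surjective hf_restrict ?_
  rintro ⟨y, hy⟩
  obtain ⟨x, rfl⟩ := hN hy
  exact ⟨⟨x, hy⟩, rfl⟩

theorem exists_maximal_isSeparated_subset {E : Type*} [PseudoEMetricSpace E] (ε : ℝ≥0∞)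
    (s : Set E) : ∃ N, Maximal (fun N => N ⊆ s ∧ Metric.IsSeparated ε N) N := by
  refine zorn_subset {N | N ⊆ s ∧ Metric.IsSeparated ε N} fun c hc hchain =>
    ⟨⋃₀ c, ⟨sUnion_subset fun N hN => (hc hN).1, ?_⟩, fun N => subset_sUnion_of_mem⟩
  exact (pairwise_sUnion hchain.directedOn).2 fun N hN => (hc hN).2

theorem isSeparable_range_of_measurable {X E : Type*} [MeasurableSpace X]
    [StandardBorelSpace X] [EMetricSpace E] [MeasurableSpace E] [OpensMeasurableSpace E]
    {f : X → E} (hf : Measurable f) : TopologicalSpace.IsSeparable (range f) := by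
  suffices h : ∀ ε > 0, ∃ N : Set E, N.Countable ∧ range f ⊆ ⋃ x ∈ N, Metric.closedEBall x ε by
    obtain ⟨t, -, ht, hft⟩ := EMetric.subset_countable_closure_of_almost_dense_set _ h
    exact ⟨t, ht, hft⟩
  intro ε hε
  obtain ⟨δ, hδ, hδε⟩ := ENNReal.lt_iff_exists_nnreal_btwn.1 hε
  obtain ⟨N, hN⟩ := exists_maximal_isSeparated_subset δ (range f)
  have hcover := Metric.isCover_iff_subset_iUnion_closedEBall.1 (.of_maximal_isSeparated hN)
  exact ⟨N, countable_of_isSeparated_subset_range hf (by simpa using hδ.ne') hN.prop.1 hN.prop.2,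
    hcover.trans (iUnion₂_mono fun x _ => Metric.closedEBall_subset_closedEBall hδε.le)⟩

theorem stronglyMeasurable_of_measurable {X E : Type*} [MeasurableSpace X]
    [StandardBorelSpace X] [MetricSpace E] [MeasurableSpace E] [BorelSpace E]
    {f : X → E} (hf : Measurable f) : StronglyMeasurable f :=
  stronglyMeasurable_iff_measurable_separable.2 ⟨hf, isSeparable_range_of_measurable hf⟩

theorem sq_lintegral_le_lintegral_mul_lintegral {α : Type*} [MeasurableSpace α] {μ : Measure α}
    {u f g : α → ℝ≥0∞} (hf : AEMeasurable f μ) (hg : AEMeasurable g μ)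
    (hu : ∀ᵐ a ∂μ, u a ^ 2 ≤ f a * g a) :
    (∫⁻ a, u a ∂μ) ^ 2 ≤ (∫⁻ a, f a ∂μ) * ∫⁻ a, g a ∂μ := by
  have hsqrt : ∀ x : ℝ≥0∞, (x ^ (2⁻¹ : ℝ)) ^ 2 = x := fun x => by
    rw [← ENNReal.rpow_mul_natCast]; norm_num
  have hsq : ∀ᵐ a ∂μ, u a ≤ f a ^ (2⁻¹ : ℝ) * g a ^ (2⁻¹ : ℝ) := hu.mono fun a ha => by
    rwa [← ENNReal.pow_le_pow_left_iff two_ne_zero, mul_pow, hsqrt, hsqrt]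
  calc (∫⁻ a, u a ∂μ) ^ 2
      ≤ ((∫⁻ a, f a ∂μ) ^ (2⁻¹ : ℝ) * (∫⁻ a, g a ∂μ) ^ (2⁻¹ : ℝ)) ^ 2 :=
        pow_le_pow_left' ((lintegral_mono_ae hsq).trans <|
          ENNReal.lintegral_mul_norm_pow_le hf hg (by norm_num) (by norm_num) (by norm_num)) 2
    _ = (∫⁻ a, f a ∂μ) * ∫⁻ a, g a ∂μ := by rw [mul_pow, hsqrt, hsqrt]

theorem lintegral_sq_lintegral_mul_le_of_schur {α β : Type*} [MeasurableSpace α] [MeasurableSpace β]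
    {μ : Measure α} {ν : Measure β} [SFinite μ] [SFinite ν] {K : α → β → ℝ≥0∞}
    (hK : Measurable (Function.uncurry K)) {p : β → ℝ≥0∞} {q : α → ℝ≥0∞} (hp : Measurable p)
    (hq : Measurable q) (hp0 : ∀ᵐ y ∂ν, p y ≠ 0) (hptop : ∀ᵐ y ∂ν, p y ≠ ∞) {A B : ℝ≥0∞}
    (hKp : ∀ᵐ x ∂μ, ∫⁻ y, K x y * p y ∂ν ≤ A * q x)
    (hKq : ∀ᵐ y ∂ν, ∫⁻ x, K x y * q x ∂μ ≤ B * p y)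
    {φ : β → ℝ≥0∞} (hφ : AEMeasurable φ ν) :
    ∫⁻ x, (∫⁻ y, K x y * φ y ∂ν) ^ 2 ∂μ ≤ A * B * ∫⁻ y, φ y ^ 2 ∂ν := by
  set ψ : β → ℝ≥0∞ := fun y => φ y ^ 2 / p y
  have hψ : AEMeasurable ψ ν := (hφ.pow_const 2).div hp.aemeasurable
  have hpψ : ∀ᵐ y ∂ν, p y * ψ y = φ y ^ 2 := by
    filter_upwards [hp0, hptop] with y h0 htop using ENNReal.mul_div_cancel h0 htop
  have hKx : ∀ x, Measurable (K x) := fun x => hK.comp measurable_prodMk_left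
  have hKψ : ∀ x, AEMeasurable (fun y => K x y * ψ y) ν := fun x => (hKx x).aemeasurable.mul hψ
  have hqKψ : AEMeasurable (Function.uncurry fun x y => q x * (K x y * ψ y)) (μ.prod ν) :=
    (hq.comp measurable_fst).aemeasurable.mul (hK.aemeasurable.mul hψ.comp_snd)
  have hcs : ∀ᵐ x ∂μ, (∫⁻ y, K x y * φ y ∂ν) ^ 2 ≤ A * ∫⁻ y, q x * (K x y * ψ y) ∂ν := by
    filter_upwards [hKp] with x hx
    calc (∫⁻ y, K x y * φ y ∂ν) ^ 2
        ≤ (∫⁻ y, K x y * p y ∂ν) * ∫⁻ y, K x y * ψ y ∂ν :=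
          sq_lintegral_le_lintegral_mul_lintegral ((hKx x).mul hp).aemeasurable (hKψ x) <|
            hpψ.mono fun y hy => by rw [mul_pow, ← hy, mul_mul_mul_comm, ← sq]
      _ ≤ A * q x * ∫⁻ y, K x y * ψ y ∂ν := by gcongr
      _ = A * ∫⁻ y, q x * (K x y * ψ y) ∂ν := by
          rw [lintegral_const_mul'' (q x) (hKψ x), mul_assoc]
  calc ∫⁻ x, (∫⁻ y, K x y * φ y ∂ν) ^ 2 ∂μ
      ≤ ∫⁻ x, A * ∫⁻ y, q x * (K x y * ψ y) ∂ν ∂μ := lintegral_mono_ae hcs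
    _ = A * ∫⁻ y, ∫⁻ x, q x * (K x y * ψ y) ∂μ ∂ν := by
        rw [← lintegral_lintegral_swap hqKψ]
        exact lintegral_const_mul'' A hqKψ.lintegral_prod_right'
    _ = A * ∫⁻ y, (∫⁻ x, K x y * q x ∂μ) * ψ y ∂ν := by
        congr! 3 with y
        have hKq_meas : Measurable fun x => K x y * q x := (hK.comp measurable_prodMk_right).mul hq
        simp only [← lintegral_mul_const _ hKq_meas, mul_left_comm, mul_assoc]
    _ ≤ A * ∫⁻ y, B * φ y ^ 2 ∂ν := by
        gcongr 1
        refine lintegral_mono_ae ?_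
        filter_upwards [hKq, hpψ] with y hy hyp
        rw [← hyp, ← mul_assoc]
        gcongr
    _ = A * B * ∫⁻ y, φ y ^ 2 ∂ν := by rw [lintegral_const_mul'' _ (hφ.pow_const 2), mul_assoc]

theorem toReal_lintegral_enorm_sq {α E : Type*} [MeasurableSpace α] [NormedAddCommGroup E]
    {μ : Measure α} {u : α → E} (hu : AEStronglyMeasurable u μ) :
    (∫⁻ x, ‖u x‖ₑ ^ 2 ∂μ).toReal = ∫ x, ‖u x‖ ^ 2 ∂μ := by
  simpa using (integral_norm_eq_lintegral_enorm (hu.norm.pow 2)).symm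

theorem integral_norm_sub_smul_sq {α H : Type*} [MeasurableSpace α] [NormedAddCommGroup H]
    [InnerProductSpace ℝ H] [CompleteSpace H] {μ : Measure α} {u : α → H} {w : α → ℝ}
    (hu : MemLp u 2 μ) (hw : MemLp w 2 μ) (c : H) :
    ∫ x, ‖u x - w x • c‖ ^ 2 ∂μ =
      ∫ x, ‖u x‖ ^ 2 ∂μ - 2 * inner ℝ c (∫ x, w x • u x ∂μ) + ‖c‖ ^ 2 * ∫ x, w x ^ 2 ∂μ := by
  have hwu : Integrable (fun x => w x • u x) μ := memLp_one_iff_integrable.1 (hu.smul hw)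
  have hexpand : ∀ x, ‖u x - w x • c‖ ^ 2 =
      ‖u x‖ ^ 2 - 2 * inner ℝ c (w x • u x) + ‖c‖ ^ 2 * w x ^ 2 := fun x => by
    rw [norm_sub_sq_real, norm_smul, mul_pow, norm_eq_abs, sq_abs, real_inner_smul_right,
      real_inner_smul_right, real_inner_comm]
    ring
  have husq : Integrable (fun x => ‖u x‖ ^ 2) μ := hu.integrable_norm_pow two_ne_zero
  have hinner : Integrable (fun x => 2 * inner ℝ c (w x • u x)) μ := (hwu.const_inner c).const_mul 2
  simp only [hexpand]
  rw [integral_add (f := fun x => ‖u x‖ ^ 2 - 2 * inner ℝ c (w x • u x)) (husq.sub hinner)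
    (hw.integrable_sq.const_mul _), integral_sub husq hinner, integral_const_mul,
    integral_const_mul, integral_inner hwu]

theorem sq_integral_norm_le {α E : Type*} [MeasurableSpace α] [NormedAddCommGroup E]
    {μ : Measure α} [IsFiniteMeasure μ] {u : α → E} (hu : MemLp u 2 μ) :
    (∫ x, ‖u x‖ ∂μ) ^ 2 ≤ μ.real univ * ∫ x, ‖u x‖ ^ 2 ∂μ := by
  have hquad : ∀ t : ℝ,
      0 ≤ μ.real univ * (t * t) + -2 * (∫ x, ‖u x‖ ∂μ) * t + ∫ x, ‖u x‖ ^ 2 ∂μ := by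
    intro t
    have hexpand := integral_norm_sub_smul_sq hu.norm (memLp_const (1 : ℝ)) t
    have hnonneg : 0 ≤ ∫ x, ‖‖u x‖ - (1 : ℝ) • t‖ ^ 2 ∂μ := by positivity
    simp only [smul_eq_mul, one_mul, norm_eq_abs, sq_abs, abs_norm] at hexpand hnonneg
    simp only [RCLike.inner_apply, ringHom_apply, one_pow, integral_const, smul_eq_mul, mul_one]
      at hexpand
    linarith
  have hdiscrim := discrim_le_zero hquad
  rw [discrim] at hdiscrim
  linarith

section QuarterWave

variable {a b x ω : ℝ}

theorem setLIntegral_Ioc_cos (hω : 0 < ω) (hax : a ≤ x) (hx : ω * (x - a) ≤ π / 2) :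
    ∫⁻ y in Ioc a x, ENNReal.ofReal (cos (ω * (y - a))) =
      ENNReal.ofReal ω⁻¹ * ENNReal.ofReal (sin (ω * (x - a))) := by
  rw [← ofReal_integral_eq_lintegral_ofReal]
  · rw [← intervalIntegral.integral_of_le hax, ← ENNReal.ofReal_mul (by positivity)]
    simp only [mul_sub]
    rw [intervalIntegral.integral_comp_mul_sub _ hω.ne', integral_cos]
    simp
  · exact (Continuous.integrableOn_Icc (by fun_prop)).mono_set Ioc_subset_Icc_self
  · filter_upwards [ae_restrict_mem measurableSet_Ioc] with y hy
    have hy0 : 0 ≤ ω * (y - a) := mul_nonneg hω.le (sub_nonneg.2 hy.1.le)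
    have hyx : ω * (y - a) ≤ ω * (x - a) := by gcongr; exact hy.2
    exact cos_nonneg_of_mem_Icc ⟨by linarith [pi_pos], hyx.trans hx⟩

theorem setLIntegral_Ioc_sin (hω : 0 < ω) (hb : ω * (b - a) = π / 2) (hax : a ≤ x)
    (hxb : x ≤ b) :
    ∫⁻ y in Ioc x b, ENNReal.ofReal (sin (ω * (y - a))) =
      ENNReal.ofReal ω⁻¹ * ENNReal.ofReal (cos (ω * (x - a))) := by
  rw [← ofReal_integral_eq_lintegral_ofReal]
  · rw [← intervalIntegral.integral_of_le hxb, ← ENNReal.ofReal_mul (by positivity)]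
    simp only [mul_sub] at hb ⊢
    rw [intervalIntegral.integral_comp_mul_sub _ hω.ne', integral_sin, hb]
    simp
  · exact (Continuous.integrableOn_Icc (by fun_prop)).mono_set Ioc_subset_Icc_self
  · filter_upwards [ae_restrict_mem measurableSet_Ioc] with y hy
    have hy0 : 0 ≤ ω * (y - a) := mul_nonneg hω.le (by linarith [hy.1])
    have hyb : ω * (y - a) ≤ ω * (b - a) := by gcongr; exact hy.2
    exact sin_nonneg_of_nonneg_of_le_pi hy0 (by linarith [pi_pos])

theorem setLIntegral_Ioc_ite_le (hx : x ≤ b) (φ : ℝ → ℝ≥0∞) :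
    ∫⁻ y in Ioc a b, (if y ≤ x then 1 else 0) * φ y = ∫⁻ y in Ioc a x, φ y := by
  have hind : ∀ y, (if y ≤ x then 1 else 0) * φ y = (Iic x).indicator φ y := fun y => by
    simp [indicator_apply]
  simp only [hind]
  rw [setLIntegral_indicator measurableSet_Iic, inter_comm, Ioc_inter_Iic, min_eq_right hx]

theorem setLIntegral_Ioc_ite_ge (hx : a ≤ x) (φ : ℝ → ℝ≥0∞) :
    ∫⁻ y in Ioc a b, (if x ≤ y then 1 else 0) * φ y = ∫⁻ y in Ioc x b, φ y := by
  have hind : ∀ᵐ y, (if x ≤ y then 1 else 0) * φ y = (Ioi x).indicator φ y := by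
    filter_upwards [Measure.ae_ne volume x] with y hy
    simp [indicator_apply, hy.symm.le_iff_lt]
  rw [lintegral_congr_ae (ae_restrict_of_ae hind), setLIntegral_indicator measurableSet_Ioi,
    inter_comm, Ioc_inter_Ioi, max_eq_right hx]

-- Integrating `cos (ω (y - a))` from the left end and `sin (ω (y - a))` up to the right end
-- exchanges the two up to the factor `ω⁻¹`, so as Schur weights they give the exact operator norm.
theorem lintegral_sq_lintegral_Ioc_left_le (hω : 0 < ω) (hb : ω * (b - a) = π / 2)
    {φ : ℝ → ℝ≥0∞} (hφ : AEMeasurable φ (volume.restrict (Ioc a b))) :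
    ∫⁻ x in Ioc a b, (∫⁻ y in Ioc a x, φ y) ^ 2 ≤
      ENNReal.ofReal ω⁻¹ ^ 2 * ∫⁻ x in Ioc a b, φ x ^ 2 := by
  have hcos0 : ∀ᵐ y ∂volume.restrict (Ioc a b), ENNReal.ofReal (cos (ω * (y - a))) ≠ 0 := by
    rw [← restrict_Ioo_eq_restrict_Ioc]
    filter_upwards [ae_restrict_mem measurableSet_Ioo] with y hy
    have hy0 : 0 < ω * (y - a) := mul_pos hω (sub_pos.2 hy.1)
    have hyb : ω * (y - a) < ω * (b - a) := by gcongr; exact hy.2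
    exact (ENNReal.ofReal_pos.2 (cos_pos_of_mem_Ioo ⟨by linarith, by linarith⟩)).ne'
  have hschur := lintegral_sq_lintegral_mul_le_of_schur (μ := volume.restrict (Ioc a b))
    (K := fun x y => if y ≤ x then 1 else 0)
    (q := fun x => ENNReal.ofReal (sin (ω * (x - a))))
    (A := ENNReal.ofReal ω⁻¹) (B := ENNReal.ofReal ω⁻¹)
    (.ite (measurableSet_le measurable_snd measurable_fst) measurable_const measurable_const)
    (by fun_prop) (by fun_prop) hcos0 (by simp) ?_ ?_ hφ
  · rw [sq (ENNReal.ofReal _)]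
    refine le_of_eq_of_le (setLIntegral_congr_fun measurableSet_Ioc fun x hx => ?_) hschur
    simp only [setLIntegral_Ioc_ite_le hx.2]
  · filter_upwards [ae_restrict_mem measurableSet_Ioc] with x hx
    have hxb : ω * (x - a) ≤ ω * (b - a) := by gcongr; exact hx.2
    rw [setLIntegral_Ioc_ite_le hx.2, setLIntegral_Ioc_cos hω hx.1.le (hxb.trans hb.le)]
  · filter_upwards [ae_restrict_mem measurableSet_Ioc] with x hx
    rw [setLIntegral_Ioc_ite_ge hx.1.le, setLIntegral_Ioc_sin hω hb hx.1.le hx.2]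

theorem lintegral_sq_lintegral_Ioc_right_le (hω : 0 < ω) (hb : ω * (b - a) = π / 2)
    {φ : ℝ → ℝ≥0∞} (hφ : AEMeasurable φ (volume.restrict (Ioc a b))) :
    ∫⁻ x in Ioc a b, (∫⁻ y in Ioc x b, φ y) ^ 2 ≤
      ENNReal.ofReal ω⁻¹ ^ 2 * ∫⁻ x in Ioc a b, φ x ^ 2 := by
  have hsin0 : ∀ᵐ y ∂volume.restrict (Ioc a b), ENNReal.ofReal (sin (ω * (y - a))) ≠ 0 := by
    filter_upwards [ae_restrict_mem measurableSet_Ioc] with y hy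
    have hy0 : 0 < ω * (y - a) := mul_pos hω (sub_pos.2 hy.1)
    have hyb : ω * (y - a) ≤ ω * (b - a) := by gcongr; exact hy.2
    exact (ENNReal.ofReal_pos.2 (sin_pos_of_pos_of_lt_pi hy0 (by linarith [pi_pos]))).ne'
  have hschur := lintegral_sq_lintegral_mul_le_of_schur (μ := volume.restrict (Ioc a b))
    (K := fun x y => if x ≤ y then 1 else 0)
    (q := fun x => ENNReal.ofReal (cos (ω * (x - a))))
    (A := ENNReal.ofReal ω⁻¹) (B := ENNReal.ofReal ω⁻¹)
    (.ite (measurableSet_le measurable_fst measurable_snd) measurable_const measurable_const)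
    (by fun_prop) (by fun_prop) hsin0 (by simp) ?_ ?_ hφ
  · rw [sq (ENNReal.ofReal _)]
    refine le_of_eq_of_le (setLIntegral_congr_fun measurableSet_Ioc fun x hx => ?_) hschur
    simp only [setLIntegral_Ioc_ite_ge hx.1.le]
  · filter_upwards [ae_restrict_mem measurableSet_Ioc] with x hx
    rw [setLIntegral_Ioc_ite_ge hx.1.le, setLIntegral_Ioc_sin hω hb hx.1.le hx.2]
  · filter_upwards [ae_restrict_mem measurableSet_Ioc] with x hx
    have hxb : ω * (x - a) ≤ ω * (b - a) := by gcongr; exact hx.2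
    rw [setLIntegral_Ioc_ite_le hx.2, setLIntegral_Ioc_cos hω hx.1.le (hxb.trans hb.le)]

variable {E : Type*} [NormedAddCommGroup E] [NormedSpace ℝ E] {g : ℝ → E}

theorem lintegral_enorm_sq_integral_Ioc_left_le (hω : 0 < ω) (hb : ω * (b - a) = π / 2)
    (hg : AEStronglyMeasurable g (volume.restrict (Ioc a b))) :
    ∫⁻ x in Ioc a b, ‖∫ t in Ioc a x, g t‖ₑ ^ 2 ≤
      ENNReal.ofReal ω⁻¹ ^ 2 * ∫⁻ x in Ioc a b, ‖g x‖ₑ ^ 2 := by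
  refine le_trans ?_ (lintegral_sq_lintegral_Ioc_left_le hω hb hg.enorm)
  gcongr
  exact enorm_integral_le_lintegral_enorm g

theorem lintegral_enorm_sq_integral_Ioc_right_le (hω : 0 < ω) (hb : ω * (b - a) = π / 2)
    (hg : AEStronglyMeasurable g (volume.restrict (Ioc a b))) :
    ∫⁻ x in Ioc a b, ‖∫ t in Ioc x b, g t‖ₑ ^ 2 ≤
      ENNReal.ofReal ω⁻¹ ^ 2 * ∫⁻ x in Ioc a b, ‖g x‖ₑ ^ 2 := by
  refine le_trans ?_ (lintegral_sq_lintegral_Ioc_right_le hω hb hg.enorm)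
  gcongr
  exact enorm_integral_le_lintegral_enorm g

end QuarterWave

section Wirtinger

variable {E : Type*} [NormedAddCommGroup E] [NormedSpace ℝ E] {a b : ℝ} {g : ℝ → E}

theorem primitive_eq_neg_integral_Ioc (hg : IntegrableOn g (Ioc a b)) (hg0 : ∫ x in a..b, g x = 0)
    {x : ℝ} (hx : x ∈ Icc a b) : ∫ t in a..x, g t = -∫ t in Ioc x b, g t := by
  rw [← intervalIntegral.integral_of_le hx.2, eq_neg_iff_add_eq_zero,
    intervalIntegral.integral_add_adjacent_intervals, hg0]
  · exact (intervalIntegrable_iff_integrableOn_Ioc_of_le hx.1).2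
      (hg.mono_set (Ioc_subset_Ioc_right hx.2))
  · exact (intervalIntegrable_iff_integrableOn_Ioc_of_le hx.2).2
      (hg.mono_set (Ioc_subset_Ioc_left hx.1))

theorem lintegral_enorm_sq_primitive_le (hab : a < b) (hg : IntegrableOn g (Ioc a b))
    (hg0 : ∫ x in a..b, g x = 0) :
    ∫⁻ x in Ioc a b, ‖∫ t in a..x, g t‖ₑ ^ 2 ≤
      ENNReal.ofReal ((b - a) / π) ^ 2 * ∫⁻ x in Ioc a b, ‖g x‖ₑ ^ 2 := by
  obtain ⟨m, ham, hmb⟩ : ∃ m, m - a = (b - a) / 2 ∧ b - m = (b - a) / 2 :=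
    ⟨(a + b) / 2, by ring, by ring⟩
  have hba : 0 < b - a := sub_pos.2 hab
  have ham' : a ≤ m := by linarith
  have hmb' : m ≤ b := by linarith
  have hω : 0 < π / (b - a) := by positivity
  have hquarter : π / (b - a) * ((b - a) / 2) = π / 2 := by field_simp
  have hfirst := lintegral_enorm_sq_integral_Ioc_left_le hω (ham ▸ hquarter)
    (hg.mono_set (Ioc_subset_Ioc_right hmb')).aestronglyMeasurable
  have hsecond := lintegral_enorm_sq_integral_Ioc_right_le hω (hmb ▸ hquarter)
    (hg.mono_set (Ioc_subset_Ioc_left ham')).aestronglyMeasurable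
  have hleft : ∀ x ∈ Ioc a m, ‖∫ t in a..x, g t‖ₑ ^ 2 = ‖∫ t in Ioc a x, g t‖ₑ ^ 2 :=
    fun x hx => by rw [intervalIntegral.integral_of_le hx.1.le]
  have hright : ∀ x ∈ Ioc m b, ‖∫ t in a..x, g t‖ₑ ^ 2 = ‖∫ t in Ioc x b, g t‖ₑ ^ 2 :=
    fun x hx => by rw [primitive_eq_neg_integral_Ioc hg hg0 ⟨ham'.trans hx.1.le, hx.2⟩, enorm_neg]
  rw [← Ioc_union_Ioc_eq_Ioc ham' hmb',
    lintegral_union measurableSet_Ioc (Ioc_disjoint_Ioc_of_le le_rfl),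
    lintegral_union measurableSet_Ioc (Ioc_disjoint_Ioc_of_le le_rfl), mul_add,
    setLIntegral_congr_fun measurableSet_Ioc hleft,
    setLIntegral_congr_fun measurableSet_Ioc hright, ← inv_div π (b - a)]
  exact add_le_add hfirst hsecond

theorem integral_norm_sq_primitive_le (hab : a < b)
    (hg : MemLp g 2 (volume.restrict (Ioc a b))) (hg0 : ∫ x in a..b, g x = 0) :
    ∫ x in Ioc a b, ‖∫ t in a..x, g t‖ ^ 2 ≤ ((b - a) / π) ^ 2 * ∫ x in Ioc a b, ‖g x‖ ^ 2 := by
  have hgi : IntegrableOn g (Ioc a b) := hg.integrable one_le_two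
  have hP : AEStronglyMeasurable (fun x => ∫ t in a..x, g t) (volume.restrict (Ioc a b)) :=
    ((intervalIntegral.continuousOn_primitive_interval'
      ((intervalIntegrable_iff_integrableOn_Ioc_of_le hab.le).2 hgi) left_mem_uIcc).mono
        (uIoc_of_le hab.le ▸ uIoc_subset_uIcc)).aestronglyMeasurable measurableSet_Ioc
  have hfin : ∫⁻ x in Ioc a b, ‖g x‖ₑ ^ 2 ≠ ∞ := by
    simpa [HasFiniteIntegral] using (hg.integrable_norm_pow two_ne_zero).2.ne
  rw [← toReal_lintegral_enorm_sq hP, ← toReal_lintegral_enorm_sq hg.1,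
    ← ENNReal.toReal_ofReal (div_nonneg (sub_nonneg.2 hab.le) pi_nonneg),
    ← ENNReal.toReal_pow, ← ENNReal.toReal_mul]
  exact ENNReal.toReal_mono (by finiteness) (lintegral_enorm_sq_primitive_le hab hgi hg0)

end Wirtinger

section SignIntegral

variable {E : Type*} [NormedAddCommGroup E] [NormedSpace ℝ E] {a b : ℝ} {h : ℝ → E}

theorem integral_smul_primitive [CompleteSpace E] (hab : a ≤ b) {w : ℝ → ℝ}
    (hw : IntegrableOn w (Ioc a b)) (hh : IntegrableOn h (Ioc a b)) :
    ∫ x in a..b, w x • ∫ y in a..x, h y = ∫ y in a..b, (∫ x in y..b, w x) • h y := by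
  have hT : MeasurableSet {p : ℝ × ℝ | p.2 < p.1} := measurableSet_lt measurable_snd measurable_fst
  have hleft : ∀ x ∈ Ioc a b, w x • ∫ y in a..x, h y =
      ∫ y in Ioc a b, {p : ℝ × ℝ | p.2 < p.1}.indicator (fun p => w p.1 • h p.2) (x, y) := by
    intro x hx
    have hind : ∀ y, {p : ℝ × ℝ | p.2 < p.1}.indicator (fun p => w p.1 • h p.2) (x, y) =
        (Iio x).indicator (fun y => w x • h y) y := fun y => by simp [indicator_apply]
    have hset : Ioc a b ∩ Iio x = Ioo a x := by
      ext y; exact ⟨fun hy => ⟨hy.1.1, hy.2⟩, fun hy => ⟨⟨hy.1, hy.2.le.trans hx.2⟩, hy.2⟩⟩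
    simp only [hind]
    rw [setIntegral_indicator measurableSet_Iio, hset, integral_smul,
      ← integral_Ioc_eq_integral_Ioo, intervalIntegral.integral_of_le hx.1.le]
  have hright : ∀ y ∈ Ioc a b, (∫ x in y..b, w x) • h y =
      ∫ x in Ioc a b, {p : ℝ × ℝ | p.2 < p.1}.indicator (fun p => w p.1 • h p.2) (x, y) := by
    intro y hy
    have hind : ∀ x, {p : ℝ × ℝ | p.2 < p.1}.indicator (fun p => w p.1 • h p.2) (x, y) =
        (Ioi y).indicator (fun x => w x • h y) x := fun x => by simp [indicator_apply]
    simp only [hind]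
    rw [setIntegral_indicator measurableSet_Ioi, Ioc_inter_Ioi, max_eq_right hy.1.le,
      integral_smul_const, intervalIntegral.integral_of_le hy.2]
  rw [intervalIntegral.integral_of_le hab, intervalIntegral.integral_of_le hab,
    setIntegral_congr_fun measurableSet_Ioc hleft, setIntegral_congr_fun measurableSet_Ioc hright]
  exact integral_integral_swap ((hw.smul_prod hh).indicator hT)

/-- The integral of `h` over `(a, b)` against the kernel `f(x, y) = ±1` according as `x < y` or not:
the function `G` of the theorem, on an arbitrary interval. -/
noncomputable def signIntegral (a b : ℝ) (h : ℝ → E) (x : ℝ) : E :=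
  ∫ y in Ioo a b, (if x < y then (1 : ℝ) else -1) • h y

theorem signIntegral_eq (hh : IntegrableOn h (Ioc a b)) {x : ℝ} (hx : x ∈ Icc a b) :
    signIntegral a b h x = (∫ y in a..b, h y) - (2 : ℝ) • ∫ y in a..x, h y := by
  have hax : IntervalIntegrable h volume a x :=
    (intervalIntegrable_iff_integrableOn_Ioc_of_le hx.1).2 (hh.mono_set (Ioc_subset_Ioc_right hx.2))
  have hxb : IntervalIntegrable h volume x b :=
    (intervalIntegrable_iff_integrableOn_Ioc_of_le hx.2).2 (hh.mono_set (Ioc_subset_Ioc_left hx.1))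
  have hle : EqOn (fun y => (if x < y then (1 : ℝ) else -1) • h y) (fun y => -h y) (uIoc a x) := by
    intro y hy
    simp [(uIoc_of_le hx.1 ▸ hy).2.not_gt]
  have hgt : EqOn (fun y => (if x < y then (1 : ℝ) else -1) • h y) h (uIoc x b) := by
    intro y hy
    simp [(uIoc_of_le hx.2 ▸ hy).1]
  rw [signIntegral, ← integral_Ioc_eq_integral_Ioo,
    ← intervalIntegral.integral_of_le (hx.1.trans hx.2),
    ← intervalIntegral.integral_add_adjacent_intervals (hax.neg.congr hle.symm)
      (hxb.congr hgt.symm), intervalIntegral.integral_congr_ae (.of_forall hle),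
    intervalIntegral.integral_congr_ae (.of_forall hgt), intervalIntegral.integral_neg, two_smul,
    ← intervalIntegral.integral_add_adjacent_intervals hax hxb]
  abel

theorem memLp_signIntegral (hab : a ≤ b) (hh : IntegrableOn h (Ioc a b)) (p : ℝ≥0∞) :
    MemLp (signIntegral a b h) p (volume.restrict (Ioc a b)) := by
  have hcont : ContinuousOn (signIntegral a b h) (Icc a b) := by
    refine ContinuousOn.congr (.sub continuousOn_const (.const_smul ?_ 2))
      fun x hx => signIntegral_eq hh hx
    rw [← uIcc_of_le hab]
    exact intervalIntegral.continuousOn_primitive_interval'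
      ((intervalIntegrable_iff_integrableOn_Ioc_of_le hab).2 hh) left_mem_uIcc
  obtain ⟨C, hC⟩ := isCompact_Icc.exists_bound_of_continuousOn hcont
  refine .of_bound ((hcont.mono Ioc_subset_Icc_self).aestronglyMeasurable measurableSet_Ioc) C ?_
  filter_upwards [ae_restrict_mem measurableSet_Ioc] with x hx using hC x (Ioc_subset_Icc_self hx)

end SignIntegral

section HalfWave

variable {a b ω : ℝ}

theorem integral_cos_sq_eq_integral_sin_sq (hω : ω * (b - a) = π) :
    ∫ x in a..b, cos (ω * (x - a)) ^ 2 = ∫ x in a..b, sin (ω * (x - a)) ^ 2 := by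
  have hω0 : ω ≠ 0 := left_ne_zero_of_mul (hω.trans_ne pi_ne_zero)
  simp only [mul_sub] at hω ⊢
  rw [intervalIntegral.integral_comp_mul_sub (fun x => cos x ^ 2) hω0,
    intervalIntegral.integral_comp_mul_sub (fun x => sin x ^ 2) hω0, hω, sub_self,
    integral_cos_sq, integral_sin_sq]
  simp

theorem integral_cos_mul_sub (hω : ω * (b - a) = π) (y : ℝ) :
    ∫ x in y..b, cos (ω * (x - a)) = -(ω⁻¹ * sin (ω * (y - a))) := by
  have hω0 : ω ≠ 0 := left_ne_zero_of_mul (hω.trans_ne pi_ne_zero)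
  simp only [mul_sub] at hω ⊢
  rw [intervalIntegral.integral_comp_mul_sub _ hω0, integral_cos, hω]
  simp

theorem integral_sin_mul_sub (hω : ω ≠ 0) (y : ℝ) :
    ∫ x in a..y, sin (ω * (x - a)) = ω⁻¹ * (1 - cos (ω * (y - a))) := by
  simp only [mul_sub ω]
  rw [intervalIntegral.integral_comp_mul_sub _ hω, integral_sin, sub_self, cos_zero, smul_eq_mul]

variable {E : Type*} [NormedAddCommGroup E] [NormedSpace ℝ E] [CompleteSpace E] {h : ℝ → E}

theorem integral_cos_smul_signIntegral (hab : a ≤ b) (hω : ω * (b - a) = π)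
    (hh : IntegrableOn h (Ioc a b)) :
    ∫ x in a..b, cos (ω * (x - a)) • signIntegral a b h x =
      ∫ y in a..b, sin (ω * (y - a)) • (2 * ω⁻¹) • h y := by
  have hcos : Continuous fun x => cos (ω * (x - a)) := by fun_prop
  have hprim := intervalIntegral.continuousOn_primitive_interval'
    ((intervalIntegrable_iff_integrableOn_Ioc_of_le hab).2 hh) left_mem_uIcc
  calc ∫ x in a..b, cos (ω * (x - a)) • signIntegral a b h x
      = ∫ x in a..b, (cos (ω * (x - a)) • (∫ y in a..b, h y) -
          (2 : ℝ) • cos (ω * (x - a)) • ∫ y in a..x, h y) :=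
        intervalIntegral.integral_congr fun x hx => by
          rw [signIntegral_eq hh (uIcc_of_le hab ▸ hx), smul_sub, smul_comm (2 : ℝ)]
    _ = -((2 : ℝ) • ∫ x in a..b, cos (ω * (x - a)) • ∫ y in a..x, h y) := by
        have hconst : IntervalIntegrable (fun x => cos (ω * (x - a)) • ∫ y in a..b, h y)
            volume a b :=
          (hcos.smul continuous_const).intervalIntegrable _ _
        have hvar : IntervalIntegrable (fun x => (2 : ℝ) • cos (ω * (x - a)) • ∫ y in a..x, h y)
            volume a b :=
          ((hcos.continuousOn.smul hprim).const_smul (2 : ℝ)).intervalIntegrable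
        rw [intervalIntegral.integral_sub hconst hvar, intervalIntegral.integral_smul_const,
          integral_cos_mul_sub hω, intervalIntegral.integral_smul]
        simp
    _ = ∫ y in a..b, sin (ω * (y - a)) • (2 * ω⁻¹) • h y := by
        rw [integral_smul_primitive hab hcos.integrableOn_Ioc hh, ← intervalIntegral.integral_smul,
          ← intervalIntegral.integral_neg]
        congr! 2 with y
        rw [integral_cos_mul_sub hω]
        module

theorem primitive_smul_sub_sin_smul (hω : ω ≠ 0) (hh : IntegrableOn h (Ioc a b))
    {x : ℝ} (hx : x ∈ Icc a b) :
    ∫ t in a..x, ((2 * ω⁻¹) • h t - sin (ω * (t - a)) • ∫ y in a..b, h y) =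
      ω⁻¹ • (cos (ω * (x - a)) • (∫ y in a..b, h y) - signIntegral a b h x) := by
  have hax : IntervalIntegrable (fun t => (2 * ω⁻¹) • h t) volume a x :=
    (intervalIntegrable_iff_integrableOn_Ioc_of_le hx.1).2
      ((hh.mono_set (Ioc_subset_Ioc_right hx.2)).smul (2 * ω⁻¹))
  rw [intervalIntegral.integral_sub hax (Continuous.intervalIntegrable (by fun_prop) _ _),
    intervalIntegral.integral_smul, intervalIntegral.integral_smul_const,
    integral_sin_mul_sub hω, signIntegral_eq hh hx]
  module

end HalfWave

theorem memLp_cos_mul_sub {μ : Measure ℝ} [IsFiniteMeasure μ] {p : ℝ≥0∞} (ω a : ℝ) :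
    MemLp (fun x => cos (ω * (x - a))) p μ :=
  .of_bound (by fun_prop) 1 (.of_forall fun _ => abs_cos_le_one _)

theorem memLp_sin_mul_sub {μ : Measure ℝ} [IsFiniteMeasure μ] {p : ℝ≥0∞} (ω a : ℝ) :
    MemLp (fun x => sin (ω * (x - a))) p μ :=
  .of_bound (by fun_prop) 1 (.of_forall fun _ => abs_sin_le_one _)

section L2Bound

variable {H : Type*} [NormedAddCommGroup H] [InnerProductSpace ℝ H] [CompleteSpace H]
  {a b ω : ℝ} {h : ℝ → H}

theorem integral_norm_sq_signIntegral_sub_cos_smul_le (hab : a < b) (hω : ω * (b - a) = π)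
    (hh : MemLp h 2 (volume.restrict (Ioc a b))) :
    ∫ x in Ioc a b, ‖signIntegral a b h x - cos (ω * (x - a)) • ∫ y in a..b, h y‖ ^ 2 ≤
      ∫ x in Ioc a b, ‖(2 * ω⁻¹) • h x - sin (ω * (x - a)) • ∫ y in a..b, h y‖ ^ 2 := by
  have hω0 : ω ≠ 0 := left_ne_zero_of_mul (hω.trans_ne pi_ne_zero)
  have hωinv : (b - a) / π = ω⁻¹ := by
    rw [← hω, div_mul_cancel_right₀ (sub_pos.2 hab).ne']
  have hh1 : IntegrableOn h (Ioc a b) := hh.integrable one_le_two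
  have hg : MemLp (fun x => (2 * ω⁻¹) • h x - sin (ω * (x - a)) • ∫ y in a..b, h y) 2
      (volume.restrict (Ioc a b)) :=
    (hh.const_smul (2 * ω⁻¹)).sub ((memLp_top_const _).smul (memLp_sin_mul_sub (p := 2) ω a))
  have hg0 : ∫ x in a..b, ((2 * ω⁻¹) • h x - sin (ω * (x - a)) • ∫ y in a..b, h y) = 0 := by
    rw [primitive_smul_sub_sin_smul hω0 hh1 (right_mem_Icc.2 hab.le),
      signIntegral_eq hh1 (right_mem_Icc.2 hab.le), hω, cos_pi]
    module
  have hwirtinger := integral_norm_sq_primitive_le hab hg hg0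
  have hprim : ∀ x ∈ Ioc a b,
      ‖∫ t in a..x, ((2 * ω⁻¹) • h t - sin (ω * (t - a)) • ∫ y in a..b, h y)‖ ^ 2 =
        ω⁻¹ ^ 2 * ‖signIntegral a b h x - cos (ω * (x - a)) • ∫ y in a..b, h y‖ ^ 2 :=
    fun x hx => by
      rw [primitive_smul_sub_sin_smul hω0 hh1 (Ioc_subset_Icc_self hx), norm_smul, norm_sub_rev,
        mul_pow, norm_eq_abs, sq_abs]
  rw [setIntegral_congr_fun measurableSet_Ioc hprim, integral_const_mul, hωinv] at hwirtinger
  exact le_of_mul_le_mul_left hwirtinger (by positivity)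

theorem integral_norm_sq_signIntegral_le (hab : a < b)
    (hh : MemLp h 2 (volume.restrict (Ioc a b))) :
    ∫ x in Ioc a b, ‖signIntegral a b h x‖ ^ 2 ≤
      (2 * ((b - a) / π)) ^ 2 * ∫ y in Ioc a b, ‖h y‖ ^ 2 := by
  have hba : b - a ≠ 0 := (sub_pos.2 hab).ne'
  obtain ⟨ω, hω⟩ : ∃ ω, ω * (b - a) = π := ⟨π / (b - a), div_mul_cancel₀ π hba⟩
  have hh1 : IntegrableOn h (Ioc a b) := hh.integrable one_le_two
  have hh2 : MemLp (fun x => (2 * ω⁻¹) • h x) 2 (volume.restrict (Ioc a b)) :=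
    hh.const_smul (2 * ω⁻¹)
  have hle := integral_norm_sq_signIntegral_sub_cos_smul_le hab hω hh
  rw [integral_norm_sub_smul_sq (memLp_signIntegral hab.le hh1 2) (memLp_cos_mul_sub ω a),
    integral_norm_sub_smul_sq hh2 (memLp_sin_mul_sub ω a)] at hle
  have hcross := integral_cos_smul_signIntegral hab.le hω hh1
  have hsq := integral_cos_sq_eq_integral_sin_sq hω
  simp only [intervalIntegral.integral_of_le hab.le] at hcross hsq
  rw [hcross, hsq, add_le_add_iff_right, sub_le_sub_iff_right] at hle
  refine hle.trans_eq ?_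
  simp only [norm_smul, mul_pow, integral_const_mul, norm_eq_abs, sq_abs, ← hω,
    div_mul_cancel_right₀ hba]

theorem integral_norm_signIntegral_le (hab : a < b)
    (hh : MemLp h 2 (volume.restrict (Ioc a b))) :
    ∫ x in Ioc a b, ‖signIntegral a b h x‖ ≤
      2 * ((b - a) / π) * √((b - a) * ∫ y in Ioc a b, ‖h y‖ ^ 2) := by
  have : 0 < b - a := sub_pos.2 hab
  have hsq := sq_integral_norm_le (memLp_signIntegral hab.le (hh.integrable one_le_two) 2)
  rw [measureReal_restrict_apply_univ, volume_real_Ioc_of_le hab.le] at hsq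
  refine le_of_abs_le (abs_le_of_sq_le_sq (hsq.trans ?_) (by positivity))
  rw [mul_pow _ (√_), sq_sqrt (by positivity), mul_left_comm]
  gcongr
  exact integral_norm_sq_signIntegral_le hab hh

end L2Bound

theorem bell_example1_G_norm_bound_general (H : Type*) [NormedAddCommGroup H]
    [InnerProductSpace ℝ H] [CompleteSpace H] (h : ℝ → H)
    (hh : MemLp h 2 (volume.restrict (Ioo (0 : ℝ) 1))) (G : ℝ → H)
    (hG : ∀ x : ℝ, G x = ∫ y in Ioo (0 : ℝ) 1, (if x < y then (1 : ℝ) else -1) • h y) :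
    ∫ x in Ioo (0 : ℝ) 1, ‖G x‖ ≤ 2 / π * √(∫ y in Ioo (0 : ℝ) 1, ‖h y‖ ^ 2) := by
  obtain rfl : G = signIntegral 0 1 h := funext hG
  rw [restrict_Ioo_eq_restrict_Ioc] at hh ⊢
  simpa [div_eq_mul_inv] using integral_norm_signIntegral_le one_pos hh

/-- Let `f : (0,1)×(0,1) → ℝ` be `1` if `x < y` and `-1` otherwise. For measurable
`h : (0,1) → H` of unit norm a.e. and `G(x) = ∫₀¹ f(x,y) h(y) dy`, one has
`∫₀¹ ‖G(x)‖ dx ≤ 2/π`. -/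
theorem bell_example1_G_norm_bound (H : Type*) [NormedAddCommGroup H]
    [InnerProductSpace ℝ H] [MeasurableSpace H] [BorelSpace H] [CompleteSpace H]
    (h : ℝ → H) (hm : Measurable h)
    (h1 : ∀ᵐ y ∂(volume.restrict (Set.Ioo (0:ℝ) 1)), ‖h y‖ = 1)
    (G : ℝ → H)
    (hG : ∀ x : ℝ, G x = ∫ y in Set.Ioo (0:ℝ) 1, (if x < y then (1:ℝ) else -1) • h y) :
    (∫ x in Set.Ioo (0:ℝ) 1, ‖G x‖) ≤ 2 / π := by
  have hL2 : MemLp h 2 (volume.restrict (Ioo (0 : ℝ) 1)) :=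
    .of_bound (stronglyMeasurable_of_measurable hm).aestronglyMeasurable 1
      (h1.mono fun _ => le_of_eq)
  have hint : ∫ y in Ioo (0 : ℝ) 1, ‖h y‖ ^ 2 = 1 := by
    rw [integral_congr_ae (g := fun _ => 1) (h1.mono fun y hy => by simp [hy])]
    simp
  simpa [hint] using bell_example1_G_norm_bound_general H h hL2 G hG
end

section
/- Suppose the pair (g,h) maximizes I_f(g,h) over all measurable functions g : X → ℝ^d, h : Y → ℝ^d with ‖g(x)‖ = 1 and ‖h(y)‖ = 1 for almost every x, y. Define G : X → ℝ^d by G(x) = ∫_Y f(x,y) h(y) dy. Then for almost every x ∈ X with G(x) ≠ 0, one has g(x) = G(x)/‖G(x)‖. -/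
open MeasureTheory
open scoped RealInnerProductSpace

/-!
With `h` fixed, `I_f(g', h) = ∫ ⟪g' x, G x⟫ dμ(x)`. Cauchy–Schwarz bounds the integrand by `‖G x‖`
for unit `g' x`, and the bound is attained by the unit field that equals `G / ‖G‖` where `G ≠ 0`
and `g` elsewhere. Hence a maximizer `g` attains equality in Cauchy–Schwarz almost everywhere.
-/

section

variable {E : Type*} [NormedAddCommGroup E] [InnerProductSpace ℝ E]

theorem real_inner_eq_norm_iff_eq_normalize {u v : E} (hu : ‖u‖ = 1) (hv : v ≠ 0) :
    ⟪u, v⟫ = ‖v‖ ↔ u = NormedSpace.normalize v := by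
  have hCauchySchwarz : ⟪u, v⟫ = ‖v‖ ↔ ‖v‖ • u = v := by
    simpa only [hu, one_mul, one_smul] using inner_eq_norm_mul_iff_real (x := u) (y := v)
  rw [hCauchySchwarz, NormedSpace.normalize, eq_inv_smul_iff₀ (norm_ne_zero_iff.mpr hv)]

variable {X : Type*} [MeasurableSpace X] {μ : Measure X} {g G : X → E}

theorem exists_stronglyMeasurable_norm_eq_one_inner_eq_norm
    (hg : AEStronglyMeasurable g μ) (hg1 : ∀ᵐ x ∂μ, ‖g x‖ = 1) (hG : AEStronglyMeasurable G μ) :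
    ∃ u : X → E, StronglyMeasurable u ∧ (∀ᵐ x ∂μ, ‖u x‖ = 1) ∧
      ∀ᵐ x ∂μ, ⟪u x, G x⟫ = ‖G x‖ := by
  classical
  obtain ⟨g₀, hg₀, hgg₀⟩ := hg
  obtain ⟨G₀, hG₀, hGG₀⟩ := hG
  have hnormalize : StronglyMeasurable fun x ↦ NormedSpace.normalize (G₀ x) :=
    hG₀.norm.measurable.inv.stronglyMeasurable.smul hG₀
  refine ⟨fun x ↦ if G₀ x = 0 then g₀ x else NormedSpace.normalize (G₀ x),
    .ite (hG₀.measurableSet_eq_fun stronglyMeasurable_zero) hg₀ hnormalize, ?_, ?_⟩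
  · filter_upwards [hg1, hgg₀] with x hx hgx
    split_ifs with h0
    · rwa [← hgx]
    · exact NormedSpace.norm_normalize h0
  · filter_upwards [hGG₀] with x hGx
    rw [hGx]
    split_ifs with h0
    · rw [h0, inner_zero_right, norm_zero]
    · exact (real_inner_eq_norm_iff_eq_normalize (NormedSpace.norm_normalize h0) h0).mpr rfl

theorem ae_inner_eq_norm_of_integral_norm_le
    (hg : AEStronglyMeasurable g μ) (hg1 : ∀ᵐ x ∂μ, ‖g x‖ ≤ 1) (hG : Integrable G μ)
    (hle : ∫ x, ‖G x‖ ∂μ ≤ ∫ x, ⟪g x, G x⟫ ∂μ) :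
    ∀ᵐ x ∂μ, ⟪g x, G x⟫ = ‖G x‖ := by
  have hbound : ∀ᵐ x ∂μ, ‖⟪g x, G x⟫‖ ≤ ‖G x‖ := by
    filter_upwards [hg1] with x hx
    exact (norm_inner_le_norm (𝕜 := ℝ) _ _).trans (mul_le_of_le_one_left (norm_nonneg _) hx)
  have hint : Integrable (fun x ↦ ⟪g x, G x⟫) μ :=
    hG.mono (hg.inner hG.aestronglyMeasurable) hbound
  have hCauchySchwarz : ∀ᵐ x ∂μ, ⟪g x, G x⟫ ≤ ‖G x‖ :=
    hbound.mono fun _ ↦ (le_abs_self _).trans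
  exact (integral_eq_iff_of_ae_le hint hG.norm hCauchySchwarz).mp
    ((integral_mono_ae hint hG.norm hCauchySchwarz).antisymm hle)

theorem ae_eq_normalize_of_forall_integral_inner_le
    (hg : AEStronglyMeasurable g μ) (hg1 : ∀ᵐ x ∂μ, ‖g x‖ = 1) (hG : Integrable G μ)
    (hmax : ∀ u : X → E, StronglyMeasurable u → (∀ᵐ x ∂μ, ‖u x‖ = 1) →
      ∫ x, ⟪u x, G x⟫ ∂μ ≤ ∫ x, ⟪g x, G x⟫ ∂μ) :
    ∀ᵐ x ∂μ, G x ≠ 0 → g x = NormedSpace.normalize (G x) := by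
  obtain ⟨u, hu, hu1, huG⟩ :=
    exists_stronglyMeasurable_norm_eq_one_inner_eq_norm hg hg1 hG.aestronglyMeasurable
  have hle : ∫ x, ‖G x‖ ∂μ ≤ ∫ x, ⟪g x, G x⟫ ∂μ := integral_congr_ae huG ▸ hmax u hu hu1
  filter_upwards [hg1, ae_inner_eq_norm_of_integral_norm_le hg (hg1.mono fun _ ↦ le_of_eq) hG hle]
    with x hx hxG hG0
  exact (real_inner_eq_norm_iff_eq_normalize hx hG0).mp hxG

variable [CompleteSpace E] {Y : Type*} [MeasurableSpace Y] {ν : Measure Y} [SFinite ν]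

theorem integral_integral_inner {k : X × Y → E} (hk : Integrable k (μ.prod ν)) (u : X → E) :
    ∫ x, ∫ y, ⟪u x, k (x, y)⟫ ∂ν ∂μ = ∫ x, ⟪u x, ∫ y, k (x, y) ∂ν⟫ ∂μ := by
  have hslice : ∀ᵐ x ∂μ, Integrable (fun y ↦ k (x, y)) ν :=
    ((integrable_prod_iff hk.aestronglyMeasurable).mp hk).1
  exact integral_congr_ae (hslice.mono fun x hx ↦ integral_inner hx (u x))

theorem maximizer_aligned_with_G_general {f : X → Y → ℝ} {h : Y → E}
    (hg : AEStronglyMeasurable g μ) (hg1 : ∀ᵐ x ∂μ, ‖g x‖ = 1)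
    (hfh : Integrable (fun p : X × Y ↦ f p.1 p.2 • h p.2) (μ.prod ν))
    (hmax : ∀ g' : X → E, StronglyMeasurable g' → (∀ᵐ x ∂μ, ‖g' x‖ = 1) →
      ∫ x, ∫ y, f x y * ⟪g' x, h y⟫ ∂ν ∂μ ≤ ∫ x, ∫ y, f x y * ⟪g x, h y⟫ ∂ν ∂μ)
    (hG : ∀ x, G x = ∫ y, f x y • h y ∂ν) :
    ∀ᵐ x ∂μ, G x ≠ 0 → g x = ‖G x‖⁻¹ • G x := by
  have hGint : Integrable G μ := funext hG ▸ hfh.integral_prod_left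
  have hpairing (u : X → E) :
      ∫ x, ∫ y, f x y * ⟪u x, h y⟫ ∂ν ∂μ = ∫ x, ⟪u x, G x⟫ ∂μ := by
    simpa only [real_inner_smul_right, ← hG] using integral_integral_inner hfh u
  simp only [hpairing] at hmax
  exact ae_eq_normalize_of_forall_integral_inner_le hg hg1 hGint hmax

end

/-- Let `(X,μ)`, `(Y,ν)` be finite measure spaces, `f : X×Y → {-1,1}` measurable, and
suppose `(g,h)` maximizes `I_f(g,h) = ∬ f(x,y) ⟨g(x), h(y)⟩` over measurable pairs of
a.e. unit norm. With `G(x) = ∫_Y f(x,y) h(y) dν(y)`, for a.e. `x` with `G(x) ≠ 0` one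
has `g(x) = G(x)/‖G(x)‖`. -/
theorem maximizer_aligned_with_G {X Y : Type*} [MeasurableSpace X] [MeasurableSpace Y]
    (μ : Measure X) (ν : Measure Y) [IsFiniteMeasure μ] [IsFiniteMeasure ν]
    (d : ℕ) (hd : 0 < d)
    (f : X → Y → ℝ) (hf : Measurable (Function.uncurry f))
    (hfval : ∀ x y, f x y = 1 ∨ f x y = -1)
    (g : X → EuclideanSpace ℝ (Fin d)) (h : Y → EuclideanSpace ℝ (Fin d))
    (hg : Measurable g) (hh : Measurable h)
    (hg1 : ∀ᵐ x ∂μ, ‖g x‖ = 1) (hh1 : ∀ᵐ y ∂ν, ‖h y‖ = 1)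
    (hmax : ∀ (g' : X → EuclideanSpace ℝ (Fin d)) (h' : Y → EuclideanSpace ℝ (Fin d)),
      Measurable g' → Measurable h' →
      (∀ᵐ x ∂μ, ‖g' x‖ = 1) → (∀ᵐ y ∂ν, ‖h' y‖ = 1) →
      (∫ x, (∫ y, f x y * ⟪g' x, h' y⟫ ∂ν) ∂μ) ≤
        ∫ x, (∫ y, f x y * ⟪g x, h y⟫ ∂ν) ∂μ)
    (G : X → EuclideanSpace ℝ (Fin d))
    (hG : ∀ x, G x = ∫ y, f x y • h y ∂ν) :
    ∀ᵐ x ∂μ, G x ≠ 0 → g x = ‖G x‖⁻¹ • G x := by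
  have hint : Integrable h ν := .of_bound hh.aestronglyMeasurable 1 (hh1.mono fun _ ↦ le_of_eq)
  have hfbound (p : X × Y) : ‖f p.1 p.2‖ ≤ 1 := by
    rcases hfval p.1 p.2 with hp | hp <;> simp [hp]
  exact maximizer_aligned_with_G_general hg.aestronglyMeasurable hg1
    ((hint.comp_snd μ).bdd_smul 1 hf.aestronglyMeasurable (.of_forall hfbound))
    (fun g' hg' hg'1 ↦ hmax g' h hg'.measurable hh hg'1 hh1) hG
end

section
/- Suppose the pair (g,h) maximizes I_f(g,h) over all measurable functions g : X → ℝ^d, h : Y → ℝ^d with ‖g(x)‖ = 1 and ‖h(y)‖ = 1 for almost every x, y. Define G : X → ℝ^d by G(x) = ∫_Y f(x,y) h(y) dy. Then I_f(g,h) = ∫_X ‖G(x)‖ dμ(x). -/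
open MeasureTheory
open scoped RealInnerProductSpace

/-!
With `h` fixed, linearity of the integral gives `I_f(g, h) = ∫ ⟪g x, G x⟫ ∂μ`, and by
Cauchy–Schwarz this is at most `∫ ‖G x‖ ∂μ` for every field `g` of unit vectors. The bound is
attained at the field pointing in the direction of `G`, completed by an arbitrary fixed unit
vector where `G` vanishes, so the maximal value is exactly `∫ ‖G x‖ ∂μ`.
-/

section

variable {X Y E : Type*} [MeasurableSpace X] [MeasurableSpace Y] {μ : Measure X} {ν : Measure Y}
  [NormedAddCommGroup E]

/-- The strongly measurable maps into `E` of norm one almost everywhere: the admissible maps of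
the maximization problem. Strong measurability is plain measurability when `E` is separable, and
lets the theory dispense with separability. -/
def unitFields (μ : Measure X) (E : Type*) [NormedAddCommGroup E] : Set (X → E) :=
  {g | StronglyMeasurable g ∧ ∀ᵐ x ∂μ, ‖g x‖ = 1}

theorem integrable_of_eq_one_or_eq_neg_one [IsFiniteMeasure μ] {f : X → ℝ}
    (hf : AEStronglyMeasurable f μ) (hf_sign : ∀ x, f x = 1 ∨ f x = -1) : Integrable f μ := by
  refine .of_bound hf 1 (.of_forall fun x => ?_)
  rcases hf_sign x with hx | hx <;> simp [hx]

theorem integrable_smul_comp_snd {𝕜 : Type*} [NormedRing 𝕜] [Module 𝕜 E] [IsBoundedSMul 𝕜 E]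
    {f : X → Y → 𝕜} {h : Y → E} {C : ℝ}
    (hf : Integrable (Function.uncurry f) (μ.prod ν)) (hh : AEStronglyMeasurable h ν)
    (hC : ∀ᵐ y ∂ν, ‖h y‖ ≤ C) :
    Integrable (fun p : X × Y => f p.1 p.2 • h p.2) (μ.prod ν) :=
  hf.smul_bdd C hh.comp_snd (Measure.quasiMeasurePreserving_snd.ae hC)

variable [InnerProductSpace ℝ E]

theorem real_inner_normalize_self (v : E) : ⟪NormedSpace.normalize v, v⟫ = ‖v‖ := by
  rw [NormedSpace.normalize, real_inner_smul_left, real_inner_self_eq_norm_mul_norm,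
    ← mul_assoc, inv_mul_mul_self]

theorem integral_inner_le_integral_norm {g G : X → E} (hg : ∀ᵐ x ∂μ, ‖g x‖ ≤ 1)
    (hG : Integrable G μ) : ∫ x, ⟪g x, G x⟫ ∂μ ≤ ∫ x, ‖G x‖ ∂μ := by
  have cauchy_schwarz : ∀ᵐ x ∂μ, ‖⟪g x, G x⟫‖ ≤ ‖G x‖ := by
    filter_upwards [hg] with x hx
    exact (norm_inner_le_norm (g x) (G x)).trans (mul_le_of_le_one_left (norm_nonneg _) hx)
  exact (Real.le_norm_self _).trans (norm_integral_le_of_norm_le hG.norm cauchy_schwarz)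

theorem exists_mem_unitFields_inner_ae_eq_norm [Nontrivial E] {G : X → E}
    (hG : AEStronglyMeasurable G μ) :
    ∃ u ∈ unitFields μ E, ∀ᵐ x ∂μ, ⟪u x, G x⟫ = ‖G x‖ := by
  classical
  obtain ⟨e, he⟩ := exists_norm_eq E zero_le_one
  have hmk : StronglyMeasurable (hG.mk G) := hG.stronglyMeasurable_mk
  let u : X → E := fun x => if hG.mk G x = 0 then e else NormedSpace.normalize (hG.mk G x)
  have hu : StronglyMeasurable u :=
    .ite (hmk.measurableSet_eq_fun stronglyMeasurable_zero) stronglyMeasurable_const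
      (hmk.norm.measurable.inv.stronglyMeasurable.smul hmk)
  have hu_norm (x : X) : ‖u x‖ = 1 := by
    by_cases hx : hG.mk G x = 0 <;> simp [u, hx, he]
  have hu_inner (x : X) : ⟪u x, hG.mk G x⟫ = ‖hG.mk G x‖ := by
    by_cases hx : hG.mk G x = 0 <;> simp [u, hx, real_inner_normalize_self]
  refine ⟨u, ⟨hu, .of_forall hu_norm⟩, ?_⟩
  filter_upwards [hG.ae_eq_mk] with x hx
  rw [hx, hu_inner]

theorem isGreatest_integral_inner_unitFields [Nontrivial E] {G : X → E} (hG : Integrable G μ) :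
    IsGreatest ((fun g : X → E => ∫ x, ⟪g x, G x⟫ ∂μ) '' unitFields μ E) (∫ x, ‖G x‖ ∂μ) := by
  constructor
  · obtain ⟨u, hu, hu_inner⟩ := exists_mem_unitFields_inner_ae_eq_norm hG.aestronglyMeasurable
    exact ⟨u, hu, integral_congr_ae hu_inner⟩
  · rintro _ ⟨g, hg, rfl⟩
    exact integral_inner_le_integral_norm (hg.2.mono fun _ hx => hx.le) hG

theorem integral_integral_mul_inner [CompleteSpace E] [SFinite ν] {f : X → Y → ℝ} {h : Y → E}
    (hfh : Integrable (fun p : X × Y => f p.1 p.2 • h p.2) (μ.prod ν)) (g : X → E) :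
    ∫ x, ∫ y, f x y * ⟪g x, h y⟫ ∂ν ∂μ = ∫ x, ⟪g x, ∫ y, f x y • h y ∂ν⟫ ∂μ := by
  refine integral_congr_ae ?_
  filter_upwards [((integrable_prod_iff hfh.aestronglyMeasurable).1 hfh).1] with x hx
  simp_rw [← integral_inner hx, real_inner_smul_right]

theorem maximizer_integral_eq_norm_G_general [CompleteSpace E] [Nontrivial E] [SFinite ν]
    {f : X → Y → ℝ} {g : X → E} {h : Y → E}
    (hfh : Integrable (fun p : X × Y => f p.1 p.2 • h p.2) (μ.prod ν)) (hg : g ∈ unitFields μ E)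
    (hmax : IsMaxOn (fun g' => ∫ x, ∫ y, f x y * ⟪g' x, h y⟫ ∂ν ∂μ) (unitFields μ E) g) :
    ∫ x, ∫ y, f x y * ⟪g x, h y⟫ ∂ν ∂μ = ∫ x, ‖∫ y, f x y • h y ∂ν‖ ∂μ := by
  simp only [integral_integral_mul_inner hfh] at hmax ⊢
  exact (hmax.isLUB hg).unique
    (isGreatest_integral_inner_unitFields hfh.integral_prod_left).isLUB

end

/-- Let `(X,μ)`, `(Y,ν)` be finite measure spaces, `f : X×Y → {-1,1}` measurable, and
suppose `(g,h)` maximizes `I_f(g,h) = ∬ f(x,y) ⟨g(x), h(y)⟩` over measurable pairs of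
a.e. unit norm. With `G(x) = ∫_Y f(x,y) h(y) dν(y)`, one has `I_f(g,h) = ∫_X ‖G(x)‖ dμ(x)`. -/
theorem maximizer_integral_eq_norm_G {X Y : Type*} [MeasurableSpace X] [MeasurableSpace Y]
    (μ : Measure X) (ν : Measure Y) [IsFiniteMeasure μ] [IsFiniteMeasure ν]
    (d : ℕ) (hd : 0 < d)
    (f : X → Y → ℝ) (hf : Measurable (Function.uncurry f))
    (hfval : ∀ x y, f x y = 1 ∨ f x y = -1)
    (g : X → EuclideanSpace ℝ (Fin d)) (h : Y → EuclideanSpace ℝ (Fin d))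
    (hg : Measurable g) (hh : Measurable h)
    (hg1 : ∀ᵐ x ∂μ, ‖g x‖ = 1) (hh1 : ∀ᵐ y ∂ν, ‖h y‖ = 1)
    (hmax : ∀ (g' : X → EuclideanSpace ℝ (Fin d)) (h' : Y → EuclideanSpace ℝ (Fin d)),
      Measurable g' → Measurable h' →
      (∀ᵐ x ∂μ, ‖g' x‖ = 1) → (∀ᵐ y ∂ν, ‖h' y‖ = 1) →
      (∫ x, (∫ y, f x y * ⟪g' x, h' y⟫ ∂ν) ∂μ) ≤
        ∫ x, (∫ y, f x y * ⟪g x, h y⟫ ∂ν) ∂μ)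
    (G : X → EuclideanSpace ℝ (Fin d))
    (hG : ∀ x, G x = ∫ y, f x y • h y ∂ν) :
    (∫ x, (∫ y, f x y * ⟪g x, h y⟫ ∂ν) ∂μ) = ∫ x, ‖G x‖ ∂μ := by
  have : Nonempty (Fin d) := ⟨⟨0, hd⟩⟩
  obtain rfl := funext hG
  have hf_int := integrable_of_eq_one_or_eq_neg_one (μ := μ.prod ν) hf.aestronglyMeasurable
    fun p => hfval p.1 p.2
  have hfh := integrable_smul_comp_snd hf_int hh.aestronglyMeasurable (hh1.mono fun _ hy => hy.le)
  exact maximizer_integral_eq_norm_G_general hfh ⟨hg.stronglyMeasurable, hg1⟩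
    fun g' hg' => hmax g' h hg'.1.measurable hh hg'.2 hh1
end

section
/- Let G, H : [0,1] → ℝ be Lipschitz functions such that for almost every x ∈ (0,1): G(x) ≠ 0, H(x) ≠ 0, G'(x) = −2 H(x)/|H(x)|, and H'(x) = 2 G(x)/|G(x)|. Then the function x ↦ |G(x)| + |H(x)| is constant on [0,1]. -/
open MeasureTheory

/-!
The system `G' = -k H / |H|`, `H' = k G / |G|` is Hamilton's, up to the time change `k`, for the
energy `|G| + |H|`: the two contributions `∓ k (G / |G|) (H / |H|)` to the derivative of the energy
cancel almost everywhere. Absolute continuity of `G` and `H` passes to the energy, and an absolutely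
continuous function with almost everywhere vanishing derivative is constant.
-/

lemma coe_sign_eq_div_abs {α : Type*} [Field α] [LinearOrder α] [IsStrictOrderedRing α] (t : α) :
    (SignType.sign t : α) = t / |t| := by
  rcases eq_or_ne t 0 with rfl | ht
  · simp
  · rw [eq_div_iff (abs_ne_zero.mpr ht), sign_mul_abs]

lemma hasDerivAt_abs_comp {f : ℝ → ℝ} {f' x : ℝ} (hfx : f x ≠ 0) (hf : HasDerivAt f f' x) :
    HasDerivAt (fun y ↦ |f y|) (f x / |f x| * f') x :=
  coe_sign_eq_div_abs (f x) ▸ (hasDerivAt_abs hfx).comp x hf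

lemma hasDerivAt_abs_add_abs_zero {G H : ℝ → ℝ} {k x : ℝ} (hGx : G x ≠ 0) (hHx : H x ≠ 0)
    (hG : HasDerivAt G (-k * (H x / |H x|)) x) (hH : HasDerivAt H (k * (G x / |G x|)) x) :
    HasDerivAt (fun y ↦ |G y| + |H y|) 0 x :=
  ((hasDerivAt_abs_comp hGx hG).add (hasDerivAt_abs_comp hHx hH)).congr_deriv (by ring)

lemma absolutelyContinuousOnInterval_comp_of_lipschitzWith {X Y : Type*} [PseudoMetricSpace X]
    [PseudoMetricSpace Y] {K : NNReal} {φ : X → Y} {f : ℝ → X} {a b : ℝ} (hφ : LipschitzWith K φ)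
    (hf : AbsolutelyContinuousOnInterval f a b) :
    AbsolutelyContinuousOnInterval (fun x ↦ φ (f x)) a b := by
  refine squeeze_zero (fun E ↦ Finset.sum_nonneg fun _ _ ↦ dist_nonneg) (fun E ↦ ?_)
    (by simpa only [mul_zero] using Filter.Tendsto.const_mul (K : ℝ) hf)
  rw [Finset.mul_sum]
  exact Finset.sum_le_sum fun _ _ ↦ hφ.dist_le_mul _ _

lemma absolutelyContinuousOnInterval_abs {f : ℝ → ℝ} {a b : ℝ}
    (hf : AbsolutelyContinuousOnInterval f a b) :
    AbsolutelyContinuousOnInterval (fun x ↦ |f x|) a b :=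
  absolutelyContinuousOnInterval_comp_of_lipschitzWith lipschitzWith_one_norm hf

lemma restrict_uIoo_eq_restrict_uIcc {α : Type*} [LinearOrder α] [MeasurableSpace α]
    (μ : Measure α) [NullSingletonClass μ] (a b : α) :
    μ.restrict (Set.uIoo a b) = μ.restrict (Set.uIcc a b) :=
  restrict_Ioo_eq_restrict_Icc

theorem abs_sum_constant_general {G H k : ℝ → ℝ} {a b : ℝ}
    (hG : AbsolutelyContinuousOnInterval G a b) (hH : AbsolutelyContinuousOnInterval H a b)
    (hde : ∀ᵐ x ∂(volume.restrict (Set.uIoo a b)),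
      G x ≠ 0 ∧ H x ≠ 0 ∧
      HasDerivAt G (-k x * (H x / |H x|)) x ∧
      HasDerivAt H (k x * (G x / |G x|)) x) :
    ∃ c : ℝ, ∀ x ∈ Set.uIcc a b, |G x| + |H x| = c := by
  have energy_ac : AbsolutelyContinuousOnInterval (fun x ↦ |G x| + |H x|) a b :=
    (absolutelyContinuousOnInterval_abs hG).fun_add (absolutelyContinuousOnInterval_abs hH)
  refine energy_ac.const_of_ae_hasDerivAt_zero ?_
  rw [← ae_restrict_iff' measurableSet_uIcc, ← restrict_uIoo_eq_restrict_uIcc]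
  filter_upwards [hde] with x ⟨hGx, hHx, hG', hH'⟩
  exact hasDerivAt_abs_add_abs_zero hGx hHx hG' hH'

/-- If `G, H : [0,1] → ℝ` are Lipschitz and for a.e. `x ∈ (0,1)` one has `G x ≠ 0`,
`H x ≠ 0`, `G'(x) = -2 H(x)/|H(x)|` and `H'(x) = 2 G(x)/|G(x)|`, then `|G| + |H|` is
constant on `[0,1]`. -/
theorem abs_sum_constant (G H : ℝ → ℝ) (KG KH : NNReal)
    (hG : LipschitzOnWith KG G (Set.Icc 0 1))
    (hH : LipschitzOnWith KH H (Set.Icc 0 1))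
    (hde : ∀ᵐ x ∂(volume.restrict (Set.Ioo (0:ℝ) 1)),
      G x ≠ 0 ∧ H x ≠ 0 ∧
      HasDerivAt G (-2 * (H x / |H x|)) x ∧
      HasDerivAt H (2 * (G x / |G x|)) x) :
    ∃ c : ℝ, ∀ x ∈ Set.Icc (0:ℝ) 1, |G x| + |H x| = c := by
  rw [← Set.uIcc_of_le zero_le_one] at hG hH ⊢
  exact abs_sum_constant_general (k := fun _ ↦ 2) hG.absolutelyContinuousOnInterval
    hH.absolutelyContinuousOnInterval (by rwa [Set.uIoo_of_le zero_le_one])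
end

section
/- Let G, H : [0,1] → ℝ be Lipschitz functions such that for almost every x ∈ (0,1): G(x) ≠ 0, H(x) ≠ 0, G'(x) = −2 H(x)/|H(x)|, and H'(x) = 2 G(x)/|G(x)|; and suppose G(0) + G(1) = 0 and H(0) + H(1) = 0. Then there exists an odd positive integer n such that |G(0)| + |H(0)| = 1/n. -/
open MeasureTheory

/-!
The quantity `|G| + |H|` is conserved, and on the square `s (|x| + |y|) = π / 2` one has
`cos (s x) = sin (s |y|)`. Hence `(x, y) ↦ sin (s x) + sin (s y) I` carries the motion along the
square, whose velocity is discontinuous at the corners, to uniform rotation of the unit circle.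
Antisymmetry over the interval says that the circle has been rotated by an odd multiple of `π`.
-/

open Set
open scoped Real NNReal

section AbsolutelyContinuous

variable {a b : ℝ}

theorem absolutelyContinuousOnInterval_lipschitzWith_comp {X Y : Type*} [PseudoMetricSpace X]
    [PseudoMetricSpace Y] {φ : X → Y} {K : ℝ≥0} {f : ℝ → X} (hφ : LipschitzWith K φ)
    (hf : AbsolutelyContinuousOnInterval f a b) :
    AbsolutelyContinuousOnInterval (fun x ↦ φ (f x)) a b := by
  unfold AbsolutelyContinuousOnInterval at hf ⊢
  refine squeeze_zero (fun E ↦ Finset.sum_nonneg fun i _ ↦ dist_nonneg) (fun E ↦ ?_)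
    (by simpa only [mul_zero] using hf.const_mul (K : ℝ))
  rw [Finset.mul_sum]
  exact Finset.sum_le_sum fun i _ ↦ hφ.dist_le_mul _ _

theorem eq_left_of_ae_hasDerivAt_zero {F : Type*} [NormedAddCommGroup F] [NormedSpace ℝ F]
    {f : ℝ → F} (hf : AbsolutelyContinuousOnInterval f a b)
    (hf' : ∀ᵐ x ∂volume.restrict (Ioo a b), HasDerivAt f 0 x) {x : ℝ} (hx : x ∈ Icc a b) :
    f x = f a := by
  have hab : uIcc a b = Icc a b := uIcc_of_le (hx.1.trans hx.2)
  rw [restrict_Ioo_eq_restrict_Icc, ae_restrict_iff' measurableSet_Icc, ← hab] at hf'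
  obtain ⟨C, hC⟩ := hf.const_of_ae_hasDerivAt_zero hf'
  rw [hC x (hab ▸ hx), hC a left_mem_uIcc]

theorem eq_exp_smul_of_ae_hasDerivAt_smul {F : Type*} [NormedAddCommGroup F] [NormedSpace ℂ F]
    {z : ℝ → F} {μ : ℂ} (hz : AbsolutelyContinuousOnInterval z a b)
    (hz' : ∀ᵐ x ∂volume.restrict (Ioo a b), HasDerivAt z (μ • z x) x) {x : ℝ}
    (hx : x ∈ Icc a b) : z x = Complex.exp (μ * (x - a)) • z a := by
  have hexp (y : ℝ) :
      HasDerivAt (fun y : ℝ ↦ Complex.exp (-μ * y)) (Complex.exp (-μ * y) * -μ) y := by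
    simpa only [Complex.ofReal_one, mul_one] using
      ((hasDerivAt_id' y).ofReal_comp.const_mul (-μ)).cexp
  have hexp_ac : AbsolutelyContinuousOnInterval (fun y : ℝ ↦ Complex.exp (-μ * y)) a b :=
    (contDiff_const.mul Complex.ofRealCLM.contDiff).cexp.contDiffOn.absolutelyContinuousOnInterval
  have hconst : Complex.exp (-μ * x) • z x = Complex.exp (-μ * a) • z a := by
    refine eq_left_of_ae_hasDerivAt_zero (hexp_ac.smul hz) ?_ hx
    filter_upwards [hz'] with y hy
    convert! (hexp y).smul hy using 1
    module
  calc z x = Complex.exp (μ * x) • Complex.exp (-μ * x) • z x := by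
        rw [smul_smul, ← Complex.exp_add, neg_mul, add_neg_cancel, Complex.exp_zero, one_smul]
    _ = Complex.exp (μ * (x - a)) • z a := by
        rw [hconst, smul_smul, ← Complex.exp_add]
        ring_nf

end AbsolutelyContinuous

theorem div_abs_eq_sign (t : ℝ) : t / |t| = SignType.sign t := by
  rcases lt_trichotomy t 0 with ht | rfl | ht
  · simp [abs_of_neg, ht, ht.ne]
  · simp
  · simp [abs_of_pos, ht, ht.ne']

theorem exists_odd_abs_eq_mul_pi_of_exp_mul_I_eq_neg_one {t : ℝ}
    (ht : Complex.exp (t * Complex.I) = -1) : ∃ n : ℕ, Odd n ∧ |t| = n * π := by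
  have hcos : Real.cos t = -1 := by
    simpa only [Complex.exp_ofReal_mul_I_re, Complex.neg_re, Complex.one_re] using
      congrArg Complex.re ht
  obtain ⟨m, rfl⟩ := Real.cos_eq_neg_one_iff.1 hcos
  refine ⟨(2 * m + 1).natAbs, Int.natAbs_odd.2 (odd_two_mul_add_one m), ?_⟩
  have hfactor : π + m * (2 * π) = (2 * m + 1 : ℤ) * π := by
    push_cast
    ring
  rw [hfactor, abs_mul, abs_of_pos Real.pi_pos, Nat.cast_natAbs, Int.cast_abs]

/-- The map `ℝ² → ℂ` that sends the square `s * (|x| + |y|) = π / 2` onto the unit circle,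
proportionally to arc length. -/
noncomputable def squareToCircle (s x y : ℝ) : ℂ :=
  Real.sin (s * x) + Real.sin (s * y) * Complex.I

section SquareToCircle

variable {s x y : ℝ}

theorem squareToCircle_neg (s x y : ℝ) :
    squareToCircle s (-x) (-y) = -squareToCircle s x y := by
  simp only [squareToCircle, mul_neg, Real.sin_neg, Complex.ofReal_neg]
  ring

theorem cos_mul_eq_sin_mul_abs (h : s * (|x| + |y|) = π / 2) :
    Real.cos (s * x) = Real.sin (s * |y|) := by
  have hcos_abs : Real.cos (s * x) = Real.cos (s * |x|) := by
    rcases abs_choice x with hx | hx <;> simp [hx]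
  rw [hcos_abs, ← Real.sin_pi_div_two_sub, ← h]
  ring_nf

theorem cos_mul_mul_div_abs_eq_sin_mul (h : s * (|x| + |y|) = π / 2) :
    Real.cos (s * x) * (y / |y|) = Real.sin (s * y) := by
  rw [cos_mul_eq_sin_mul_abs h, div_abs_eq_sign]
  rcases lt_trichotomy y 0 with hy | rfl | hy
  · simp [abs_of_neg, hy]
  · simp
  · simp [abs_of_pos, hy]

theorem norm_squareToCircle (h : s * (|x| + |y|) = π / 2) : ‖squareToCircle s x y‖ = 1 := by
  have hsin_sq : Real.sin (s * y) ^ 2 = Real.sin (s * |y|) ^ 2 := by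
    rcases abs_choice y with hy | hy <;> simp [hy]
  rw [squareToCircle, Complex.norm_add_mul_I, hsin_sq, ← cos_mul_eq_sin_mul_abs h,
    Real.sin_sq_add_cos_sq, Real.sqrt_one]

theorem absolutelyContinuousOnInterval_squareToCircle {G H : ℝ → ℝ} {a b : ℝ} (s : ℝ)
    (hG : AbsolutelyContinuousOnInterval G a b) (hH : AbsolutelyContinuousOnInterval H a b) :
    AbsolutelyContinuousOnInterval (fun x ↦ squareToCircle s (G x) (H x)) a b := by
  have hsin {f : ℝ → ℝ} (hf : AbsolutelyContinuousOnInterval f a b) :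
      AbsolutelyContinuousOnInterval (fun x ↦ (Real.sin (s * f x) : ℂ)) a b :=
    absolutelyContinuousOnInterval_lipschitzWith_comp
      (φ := fun t : ℝ ↦ (Real.sin t : ℂ))
      (Complex.isometry_ofReal.lipschitz.comp Real.lipschitzWith_sin) (hf.const_mul s)
  simpa only [squareToCircle, smul_eq_mul, mul_comm Complex.I] using
    (hsin hG).fun_add ((hsin hH).const_smul Complex.I)

end SquareToCircle

/-- The curve `(G, H)` lies off the coordinate axes at time `x` and moves there with velocity
`k * (-sign H, sign G)`, that is, along the square `|G| + |H| = const` through its position. -/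
structure IsSquareRotationAt (k : ℝ) (G H : ℝ → ℝ) (x : ℝ) : Prop where
  fst_ne_zero : G x ≠ 0
  snd_ne_zero : H x ≠ 0
  hasDerivAt_fst : HasDerivAt G (-k * (H x / |H x|)) x
  hasDerivAt_snd : HasDerivAt H (k * (G x / |G x|)) x

namespace IsSquareRotationAt

variable {k : ℝ} {G H : ℝ → ℝ} {a b x : ℝ}

theorem hasDerivAt_abs_add_abs (h : IsSquareRotationAt k G H x) :
    HasDerivAt (fun y ↦ |G y| + |H y|) 0 x := by
  convert! ((hasDerivAt_abs h.fst_ne_zero).comp x h.hasDerivAt_fst).add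
    ((hasDerivAt_abs h.snd_ne_zero).comp x h.hasDerivAt_snd) using 1
  rw [div_abs_eq_sign, div_abs_eq_sign]
  ring

theorem hasDerivAt_squareToCircle {s : ℝ} (h : IsSquareRotationAt k G H x)
    (hs : s * (|G x| + |H x|) = π / 2) :
    HasDerivAt (fun y ↦ squareToCircle s (G y) (H y))
      ((s * k : ℝ) * Complex.I * squareToCircle s (G x) (H x)) x := by
  have hsinG : HasDerivAt (fun y ↦ Real.sin (s * G y)) (-(s * k) * Real.sin (s * H x)) x := by
    convert! (h.hasDerivAt_fst.const_mul s).sin using 1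
    rw [← cos_mul_mul_div_abs_eq_sin_mul hs]
    ring
  have hsinH : HasDerivAt (fun y ↦ Real.sin (s * H y)) (s * k * Real.sin (s * G x)) x := by
    convert! (h.hasDerivAt_snd.const_mul s).sin using 1
    rw [← cos_mul_mul_div_abs_eq_sin_mul (add_comm |G x| |H x| ▸ hs)]
    ring
  convert! hsinG.ofReal_comp.add (hsinH.ofReal_comp.mul_const Complex.I) using 1
  simp only [squareToCircle]
  push_cast
  linear_combination (s * k * Complex.sin (s * H x)) * Complex.I_sq

theorem abs_add_abs_eq_left (hG : AbsolutelyContinuousOnInterval G a b)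
    (hH : AbsolutelyContinuousOnInterval H a b)
    (hde : ∀ᵐ x ∂volume.restrict (Ioo a b), IsSquareRotationAt k G H x) (hx : x ∈ Icc a b) :
    |G x| + |H x| = |G a| + |H a| := by
  have habs {f : ℝ → ℝ} (hf : AbsolutelyContinuousOnInterval f a b) :
      AbsolutelyContinuousOnInterval (fun x ↦ |f x|) a b :=
    absolutelyContinuousOnInterval_lipschitzWith_comp lipschitzWith_one_norm hf
  exact eq_left_of_ae_hasDerivAt_zero ((habs hG).add (habs hH))
    (hde.mono fun _ h ↦ h.hasDerivAt_abs_add_abs) hx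

theorem abs_add_abs_left_pos (hab : a < b) (hG : AbsolutelyContinuousOnInterval G a b)
    (hH : AbsolutelyContinuousOnInterval H a b)
    (hde : ∀ᵐ x ∂volume.restrict (Ioo a b), IsSquareRotationAt k G H x) :
    0 < |G a| + |H a| := by
  have : (ae (volume.restrict (Ioo a b))).NeBot := by
    rw [ae_neBot, Ne, Measure.restrict_eq_zero, Real.volume_Ioo, ENNReal.ofReal_eq_zero]
    linarith
  obtain ⟨x, hx, hxde⟩ := ((ae_restrict_mem measurableSet_Ioo).and hde).exists
  rw [← abs_add_abs_eq_left hG hH hde (Ioo_subset_Icc_self hx)]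
  exact add_pos (abs_pos.2 hxde.fst_ne_zero) (abs_pos.2 hxde.snd_ne_zero)

theorem squareToCircle_eq_exp_mul {s : ℝ} (hG : AbsolutelyContinuousOnInterval G a b)
    (hH : AbsolutelyContinuousOnInterval H a b)
    (hde : ∀ᵐ x ∂volume.restrict (Ioo a b), IsSquareRotationAt k G H x)
    (hs : s * (|G a| + |H a|) = π / 2) (hx : x ∈ Icc a b) :
    squareToCircle s (G x) (H x) =
      Complex.exp ((s * k : ℝ) * Complex.I * (x - a)) * squareToCircle s (G a) (H a) := by
  refine eq_exp_smul_of_ae_hasDerivAt_smul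
    (absolutelyContinuousOnInterval_squareToCircle s hG hH) ?_ hx
  filter_upwards [hde, ae_restrict_mem measurableSet_Ioo] with y hy hymem
  apply hy.hasDerivAt_squareToCircle
  rw [abs_add_abs_eq_left hG hH hde (Ioo_subset_Icc_self hymem), hs]

theorem exp_mul_I_eq_neg_one_of_antisymmetric {s : ℝ} (hab : a ≤ b)
    (hG : AbsolutelyContinuousOnInterval G a b) (hH : AbsolutelyContinuousOnInterval H a b)
    (hde : ∀ᵐ x ∂volume.restrict (Ioo a b), IsSquareRotationAt k G H x)
    (hs : s * (|G a| + |H a|) = π / 2) (hGend : G a + G b = 0) (hHend : H a + H b = 0) :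
    Complex.exp ((s * k * (b - a) : ℝ) * Complex.I) = -1 := by
  have hrot := squareToCircle_eq_exp_mul hG hH hde hs (right_mem_Icc.2 hab)
  rw [eq_neg_of_add_eq_zero_right hGend, eq_neg_of_add_eq_zero_right hHend,
    squareToCircle_neg] at hrot
  have hne : squareToCircle s (G a) (H a) ≠ 0 :=
    norm_ne_zero_iff.1 (norm_squareToCircle hs ▸ one_ne_zero)
  apply mul_right_cancel₀ hne
  rw [neg_one_mul, hrot]
  push_cast
  ring_nf

end IsSquareRotationAt

theorem abs_sum_reciprocal_odd_general {G H : ℝ → ℝ} {a b k : ℝ} (hab : a < b)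
    (hG : AbsolutelyContinuousOnInterval G a b) (hH : AbsolutelyContinuousOnInterval H a b)
    (hde : ∀ᵐ x ∂volume.restrict (Ioo a b), IsSquareRotationAt k G H x)
    (hGend : G a + G b = 0) (hHend : H a + H b = 0) :
    ∃ n : ℕ, Odd n ∧ |G a| + |H a| = |k| * (b - a) / (2 * n) := by
  have hc := IsSquareRotationAt.abs_add_abs_left_pos hab hG hH hde
  have hs : π / (2 * (|G a| + |H a|)) * (|G a| + |H a|) = π / 2 := by field_simp
  obtain ⟨n, hn, hangle⟩ := exists_odd_abs_eq_mul_pi_of_exp_mul_I_eq_neg_one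
    (IsSquareRotationAt.exp_mul_I_eq_neg_one_of_antisymmetric hab.le hG hH hde hs hGend hHend)
  have hn_pos : (0 : ℝ) < n := Nat.cast_pos.2 hn.pos
  refine ⟨n, hn, ?_⟩
  rw [abs_mul, abs_mul, abs_of_pos (show 0 < π / (2 * (|G a| + |H a|)) by positivity),
    abs_of_pos (sub_pos.2 hab)] at hangle
  field_simp at hangle ⊢
  linarith

/-- If `G, H : [0,1] → ℝ` are Lipschitz, for a.e. `x ∈ (0,1)` one has `G x ≠ 0`,
`H x ≠ 0`, `G'(x) = -2 H(x)/|H(x)|` and `H'(x) = 2 G(x)/|G(x)|`, and moreover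
`G(0) + G(1) = 0` and `H(0) + H(1) = 0`, then `|G(0)| + |H(0)| = 1/n` for some odd
positive integer `n`. -/
theorem abs_sum_reciprocal_odd (G H : ℝ → ℝ) (KG KH : NNReal)
    (hG : LipschitzOnWith KG G (Set.Icc 0 1))
    (hH : LipschitzOnWith KH H (Set.Icc 0 1))
    (hde : ∀ᵐ x ∂(volume.restrict (Set.Ioo (0:ℝ) 1)),
      G x ≠ 0 ∧ H x ≠ 0 ∧
      HasDerivAt G (-2 * (H x / |H x|)) x ∧
      HasDerivAt H (2 * (G x / |G x|)) x)
    (hGend : G 0 + G 1 = 0) (hHend : H 0 + H 1 = 0) :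
    ∃ n : ℕ, 0 < n ∧ Odd n ∧ |G 0| + |H 0| = 1 / (n : ℝ) := by
  obtain ⟨n, hn, h⟩ := abs_sum_reciprocal_odd_general (zero_lt_one' ℝ)
    (uIcc_of_le (zero_le_one' ℝ) ▸ hG).absolutelyContinuousOnInterval
    (uIcc_of_le (zero_le_one' ℝ) ▸ hH).absolutelyContinuousOnInterval
    (hde.mono fun _ ⟨hGx, hHx, hG', hH'⟩ ↦ ⟨hGx, hHx, hG', hH'⟩) hGend hHend
  exact ⟨n, hn.pos, hn, by simpa [div_mul_cancel_left₀] using h⟩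
end
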